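/- arXiv:2002.01383 — 4 statements merged into one kernel-verified Lean document; each statement's English description precedes it below -/
import Mathlib

section
/- Let X be a complex Banach space, let 0 < θ ≤ π/2, let q > 2 and s ∈ (1,2), and set p := q(s-1)/s; assume p > 1. Then for every R > 0 there exists a constant C_R > 0, depending only on R, θ, q and s (in particular independent of f), with C_R → 0 as R → 0⁺, such that every f in the Bergman space B^q_θ(X) satisfies (∫_0^R ‖f(t)‖_X^p dt)^{1/p} ≤ C_R ‖f‖_{B^q_θ(X)} (the integral is over the real segment (0,R), on which f is continuous since (0,R) ⊂ Σ_θ). -/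
open MeasureTheory Filter Set

/-- The open sector `Σ_θ` of angle `θ` in the complex plane. -/
def sector (θ : ℝ) : Set ℂ := {z : ℂ | z ≠ 0 ∧ |z.arg| < θ}

/-!
By the mean value property and Hölder's inequality, a holomorphic function on the disc `B(c, ρ)` is
bounded at `c` by `(π ρ²)^(-1/q)` times its `L^q` norm on the disc. The sector is a cone around the
positive axis, so it contains a disc `B(t, δ t)` for each `t > 0`, and hence
`‖f t‖ ≤ K t^(-2/q) ‖f‖_{B^q_θ}`. The function `t ↦ t^(-2p/q)` is integrable near `0` as soon as
`2 p < q`; for `p = q (s - 1) / s` this is the condition `s < 2`.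
-/

open Metric
open scoped ENNReal

theorem lintegral_eq_lintegral_lintegral_circleMap {F : ℂ → ℝ≥0∞} (hF : Measurable F) (c : ℂ) :
    ∫⁻ z, F z = ∫⁻ r in Ioi (0 : ℝ), ENNReal.ofReal r *
      ∫⁻ φ in Ioo (-Real.pi) Real.pi, F (circleMap c r φ) := by
  have hpolar (p : ℝ × ℝ) : c + Complex.polarCoord.symm p = circleMap c p.1 p.2 := by
    rw [Complex.polarCoord_symm_apply, circleMap, Complex.exp_mul_I, Complex.ofReal_cos,
      Complex.ofReal_sin]
  have hmeas : Measurable fun p : ℝ × ℝ ↦ F (circleMap c p.1 p.2) :=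
    hF.comp (by unfold circleMap; fun_prop)
  calc ∫⁻ z, F z = ∫⁻ z, F (c + z) := (lintegral_add_left_eq_self F c).symm
    _ = ∫⁻ p in Ioi (0 : ℝ) ×ˢ Ioo (-Real.pi) Real.pi,
          ENNReal.ofReal p.1 * F (circleMap c p.1 p.2) := by
      simp only [← Complex.lintegral_comp_polarCoord_symm, hpolar, smul_eq_mul, polarCoord_target]
    _ = ∫⁻ r in Ioi (0 : ℝ), ∫⁻ φ in Ioo (-Real.pi) Real.pi,
          ENNReal.ofReal r * F (circleMap c r φ) :=
      setLIntegral_prod _ (by fun_prop)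
    _ = ∫⁻ r in Ioi (0 : ℝ), ENNReal.ofReal r *
          ∫⁻ φ in Ioo (-Real.pi) Real.pi, F (circleMap c r φ) :=
      lintegral_congr fun r ↦ lintegral_const_mul _ (hmeas.comp measurable_prodMk_left)

section MeanValue

variable {E : Type*} [NormedAddCommGroup E] [NormedSpace ℂ E] {f : ℂ → E} {c : ℂ} {ρ : ℝ}

theorem integral_circleMap_eq_two_pi_smul [CompleteSpace E]
    (hf : DiffContOnCl ℂ f (ball c |ρ|)) :
    ∫ φ in Ioo (-Real.pi) Real.pi, f (circleMap c ρ φ) = (2 * Real.pi) • f c := by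
  rw [← hf.circleAverage, Real.circleAverage_eq_integral_add (-Real.pi),
    intervalIntegral.integral_comp_add_right fun φ ↦ f (circleMap c ρ φ),
    smul_inv_smul₀ Real.two_pi_pos.ne', zero_add, two_mul, add_neg_cancel_right,
    intervalIntegral.integral_of_le (by linarith [Real.pi_pos]), integral_Ioc_eq_integral_Ioo]

theorem two_pi_mul_enorm_le_lintegral_enorm_circleMap (hf : DiffContOnCl ℂ f (ball c |ρ|)) :
    ENNReal.ofReal (2 * Real.pi) * ‖f c‖ₑ ≤
      ∫⁻ φ in Ioo (-Real.pi) Real.pi, ‖f (circleMap c ρ φ)‖ₑ := by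
  -- The circle integral is taken in the completion because `E` need not be complete.
  let e : E →L[ℂ] UniformSpace.Completion E := UniformSpace.Completion.toComplL
  have he (x : E) : ‖e x‖ₑ = ‖x‖ₑ := UniformSpace.Completion.enorm_coe x
  calc ENNReal.ofReal (2 * Real.pi) * ‖f c‖ₑ = ‖(2 * Real.pi) • e (f c)‖ₑ := by
        rw [enorm_smul, he, Real.enorm_eq_ofReal Real.two_pi_pos.le]
    _ = ‖∫ φ in Ioo (-Real.pi) Real.pi, e (f (circleMap c ρ φ))‖ₑ :=
      congrArg _ (integral_circleMap_eq_two_pi_smul (e.differentiable.comp_diffContOnCl hf)).symm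
    _ ≤ ∫⁻ φ in Ioo (-Real.pi) Real.pi, ‖f (circleMap c ρ φ)‖ₑ := by
      simpa only [he] using enorm_integral_le_lintegral_enorm (μ := volume.restrict _)
        fun φ ↦ e (f (circleMap c ρ φ))

theorem enorm_mul_volume_ball_le_lintegral_enorm (hf : DifferentiableOn ℂ f (ball c ρ)) :
    ‖f c‖ₑ * volume (ball c ρ) ≤ ∫⁻ z in ball c ρ, ‖f z‖ₑ := by
  classical
  have hmeas : Measurable ((ball c ρ).indicator (‖f ·‖ₑ)) := by
    rw [← piecewise_eq_indicator]
    exact hf.continuousOn.enorm.measurable_piecewise continuousOn_const measurableSet_ball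
  rw [← setLIntegral_const, ← lintegral_indicator measurableSet_ball,
    ← lintegral_indicator measurableSet_ball,
    lintegral_eq_lintegral_lintegral_circleMap (measurable_const.indicator measurableSet_ball) c,
    lintegral_eq_lintegral_lintegral_circleMap hmeas c]
  refine setLIntegral_mono' measurableSet_Ioi fun r (hr : 0 < r) ↦ ?_
  gcongr ENNReal.ofReal r * ?_
  by_cases hrρ : r < ρ
  · have hmem (φ : ℝ) : circleMap c r φ ∈ ball c ρ := by
      simpa [dist_eq_norm, abs_of_pos hr] using hrρ
    have hd : DiffContOnCl ℂ f (ball c |r|) :=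
      hf.diffContOnCl_ball (closedBall_subset_ball (by rwa [abs_of_pos hr]))
    simpa [hmem, mul_comm, ← two_mul] using two_pi_mul_enorm_le_lintegral_enorm_circleMap hd
  · have hnotMem (φ : ℝ) : circleMap c r φ ∉ ball c ρ := by
      simpa [dist_eq_norm, abs_of_pos hr] using hrρ
    simp [hnotMem]

theorem enorm_mul_volume_ball_rpow_le_eLpNorm {q : ℝ≥0∞} (hq : 1 ≤ q) (hρ : 0 < ρ)
    (hf : DifferentiableOn ℂ f (ball c ρ)) :
    ‖f c‖ₑ * volume (ball c ρ) ^ (1 / q.toReal) ≤ eLpNorm f q (volume.restrict (ball c ρ)) := by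
  set V := volume (ball c ρ)
  have hV0 : V ≠ 0 := (measure_ball_pos volume c hρ).ne'
  have hVtop : V ≠ ∞ := measure_ball_lt_top.ne
  have hHolder := eLpNorm_le_eLpNorm_mul_rpow_measure_univ (μ := volume.restrict (ball c ρ)) hq
    (hf.continuousOn.aestronglyMeasurable measurableSet_ball)
  rw [Measure.restrict_apply_univ, ENNReal.toReal_one, div_one] at hHolder
  suffices ‖f c‖ₑ * V ^ (1 / q.toReal) * V ^ (1 - 1 / q.toReal) ≤
      eLpNorm f q (volume.restrict (ball c ρ)) * V ^ (1 - 1 / q.toReal) from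
    (ENNReal.mul_le_mul_iff_left (ENNReal.rpow_pos hV0.bot_lt hVtop).ne'
      (ENNReal.rpow_ne_top_of_ne_zero hV0 hVtop)).1 this
  calc ‖f c‖ₑ * V ^ (1 / q.toReal) * V ^ (1 - 1 / q.toReal) = ‖f c‖ₑ * V := by
        rw [mul_assoc, ← ENNReal.rpow_add _ _ hV0 hVtop, add_sub_cancel, ENNReal.rpow_one]
    _ ≤ eLpNorm f 1 (volume.restrict (ball c ρ)) := by
      rw [eLpNorm_one_eq_lintegral_enorm]
      exact enorm_mul_volume_ball_le_lintegral_enorm hf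
    _ ≤ eLpNorm f q (volume.restrict (ball c ρ)) * V ^ (1 - 1 / q.toReal) := hHolder

theorem norm_le_rpow_mul_integral_norm_rpow_ball {q : ℝ} (hq : 1 ≤ q) (hρ : 0 < ρ)
    (hf : DifferentiableOn ℂ f (ball c ρ)) (hfq : IntegrableOn (fun z ↦ ‖f z‖ ^ q) (ball c ρ)) :
    ‖f c‖ ≤ (Real.pi * ρ ^ 2) ^ (-(1 / q)) * (∫ z in ball c ρ, ‖f z‖ ^ q) ^ (1 / q) := by
  have hq0 : 0 < q := by linarith
  have hV : 0 < Real.pi * ρ ^ 2 := by positivity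
  have hvol : volume (ball c ρ) = ENNReal.ofReal (Real.pi * ρ ^ 2) := by
    rw [Complex.volume_ball, ENNReal.ofReal_mul Real.pi_pos.le, ENNReal.ofReal_pow hρ.le, mul_comm,
      ← NNReal.coe_real_pi, ENNReal.ofReal_coe_nnreal]
  have hne : ENNReal.ofReal q ≠ 0 := by simpa using hq0
  have hqr : (ENNReal.ofReal q).toReal = q := ENNReal.toReal_ofReal hq0.le
  have hmem : MemLp f (ENNReal.ofReal q) (volume.restrict (ball c ρ)) := by
    rw [← integrable_norm_rpow_iff (hf.continuousOn.aestronglyMeasurable measurableSet_ball) hne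
      ENNReal.ofReal_ne_top, hqr]
    exact hfq
  have hmean := enorm_mul_volume_ball_rpow_le_eLpNorm (q := ENNReal.ofReal q)
    (ENNReal.one_le_ofReal.2 hq) hρ hf
  rw [hmem.eLpNorm_eq_integral_rpow_norm hne ENNReal.ofReal_ne_top, hqr, hvol,
    ENNReal.ofReal_rpow_of_pos hV, ← ofReal_norm, ← ENNReal.ofReal_mul (norm_nonneg _),
    ENNReal.ofReal_le_ofReal_iff (by positivity), ← one_div] at hmean
  rwa [Real.rpow_neg hV.le, ← div_eq_inv_mul, le_div_iff₀ (by positivity)]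

end MeanValue

theorem exists_ball_mul_subset_sector {θ : ℝ} (hθ : 0 < θ) :
    ∃ δ > 0, ∀ t : ℝ, 0 < t → ball (t : ℂ) (δ * t) ⊆ sector θ := by
  have hnear : sector θ ∈ nhds 1 := by
    have harg : ContinuousAt (fun z : ℂ ↦ |z.arg|) 1 := (Complex.continuousAt_arg (by simp)).abs
    exact Filter.inter_mem (isOpen_ne.mem_nhds one_ne_zero)
      (harg.eventually_lt continuousAt_const (by simpa using hθ))
  obtain ⟨δ, hδ, hball⟩ := Metric.mem_nhds_iff.1 hnear
  refine ⟨δ, hδ, fun t ht z hz ↦ ?_⟩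
  have htC : (t : ℂ) ≠ 0 := by exact_mod_cast ht.ne'
  obtain ⟨w, rfl⟩ : ∃ w, z = t * w := ⟨z / t, (mul_div_cancel₀ z htC).symm⟩
  have hw : w ∈ ball (1 : ℂ) δ := by
    rw [mem_ball, dist_eq_norm] at hz ⊢
    rw [← mul_sub_one, norm_mul, Complex.norm_of_nonneg ht.le, mul_comm] at hz
    exact lt_of_mul_lt_mul_right hz ht.le
  obtain ⟨hw0, hwarg⟩ := hball hw
  exact ⟨mul_ne_zero htC hw0, by rwa [Complex.arg_real_mul _ ht]⟩

theorem ofReal_mem_sector {θ t : ℝ} (hθ : 0 < θ) (ht : 0 < t) : (t : ℂ) ∈ sector θ :=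
  ⟨by exact_mod_cast ht.ne', by simpa [Complex.arg_ofReal_of_nonneg ht.le] using hθ⟩

theorem exists_norm_le_mul_rpow_of_sector (E : Type*) [NormedAddCommGroup E] [NormedSpace ℂ E]
    {θ q : ℝ} (hθ : 0 < θ) (hq : 1 ≤ q) :
    ∃ K > 0, ∀ f : ℂ → E, DifferentiableOn ℂ f (sector θ) →
      IntegrableOn (fun z ↦ ‖f z‖ ^ q) (sector θ) → ∀ t : ℝ, 0 < t →
        ‖f t‖ ≤ K * (∫ z in sector θ, ‖f z‖ ^ q) ^ (1 / q) * t ^ (-(2 / q)) := by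
  obtain ⟨δ, hδ, hball⟩ := exists_ball_mul_subset_sector hθ
  refine ⟨(Real.pi * δ ^ 2) ^ (-(1 / q)), by positivity, fun f hf hfq t ht ↦ ?_⟩
  have hscale : (Real.pi * (δ * t) ^ 2) ^ (-(1 / q)) =
      (Real.pi * δ ^ 2) ^ (-(1 / q)) * t ^ (-(2 / q)) := by
    rw [mul_pow, ← mul_assoc, Real.mul_rpow (by positivity) (by positivity),
      ← Real.rpow_natCast_mul ht.le]
    congr 2
    push_cast
    ring
  calc ‖f t‖ ≤ (Real.pi * (δ * t) ^ 2) ^ (-(1 / q)) *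
        (∫ z in ball (t : ℂ) (δ * t), ‖f z‖ ^ q) ^ (1 / q) :=
      norm_le_rpow_mul_integral_norm_rpow_ball hq (by positivity) (hf.mono (hball t ht))
        (hfq.mono_set (hball t ht))
    _ ≤ (Real.pi * (δ * t) ^ 2) ^ (-(1 / q)) * (∫ z in sector θ, ‖f z‖ ^ q) ^ (1 / q) := by
      gcongr ?_ * ?_ ^ (1 / q)
      exact setIntegral_mono_set hfq (ae_of_all _ fun z ↦ by positivity) (hball t ht).eventuallyLE
    _ = (Real.pi * δ ^ 2) ^ (-(1 / q)) * (∫ z in sector θ, ‖f z‖ ^ q) ^ (1 / q) *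
        t ^ (-(2 / q)) := by rw [hscale]; ring

theorem setIntegral_Ioo_zero_rpow {r R : ℝ} (hr : -1 < r) (hR : 0 ≤ R) :
    ∫ t in Ioo 0 R, t ^ r = R ^ (r + 1) / (r + 1) := by
  rw [← integral_Ioc_eq_integral_Ioo, ← intervalIntegral.integral_of_le hR,
    integral_rpow (.inl hr), Real.zero_rpow (by linarith), sub_zero]

theorem integrableOn_Ioo_zero_const_mul_rpow {r R : ℝ} (hr : -1 < r) (hR : 0 < R) (B : ℝ) :
    IntegrableOn (fun t : ℝ ↦ B * t ^ r) (Ioo 0 R) :=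
  ((intervalIntegral.integrableOn_Ioo_rpow_iff hR).2 hr).const_mul B

section PowerWeight

variable {E : Type*} [NormedAddCommGroup E] {g : ℝ → E} {A α p R : ℝ}

theorem norm_rpow_le_mul_rpow_of_norm_le {t : ℝ} (ht : 0 < t) (hp : 0 ≤ p) (hA : 0 ≤ A)
    (hg : ‖g t‖ ≤ A * t ^ (-α)) : ‖g t‖ ^ p ≤ A ^ p * t ^ (-(α * p)) := by
  rw [← neg_mul, Real.rpow_mul ht.le, ← Real.mul_rpow hA (by positivity)]
  gcongr

theorem integrableOn_Ioo_norm_rpow_of_norm_le_mul_rpow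
    (hmeas : AEStronglyMeasurable g (volume.restrict (Ioo 0 R))) (hp : 0 ≤ p) (hA : 0 ≤ A)
    (hα : α * p < 1) (hR : 0 < R) (hg : ∀ t ∈ Ioo 0 R, ‖g t‖ ≤ A * t ^ (-α)) :
    IntegrableOn (fun t ↦ ‖g t‖ ^ p) (Ioo 0 R) := by
  refine (integrableOn_Ioo_zero_const_mul_rpow (by linarith : -1 < -(α * p)) hR (A ^ p)).mono'
    (hmeas.norm.aemeasurable.pow_const p).aestronglyMeasurable
    (ae_restrict_of_forall_mem measurableSet_Ioo fun t ht ↦ ?_)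
  rw [Real.norm_of_nonneg (by positivity)]
  exact norm_rpow_le_mul_rpow_of_norm_le ht.1 hp hA (hg t ht)

theorem integral_Ioo_norm_rpow_rpow_le_of_norm_le_mul_rpow (hp : 0 < p) (hA : 0 ≤ A)
    (hα : α * p < 1) (hR : 0 < R) (hg : ∀ t ∈ Ioo 0 R, ‖g t‖ ≤ A * t ^ (-α)) :
    (∫ t in Ioo 0 R, ‖g t‖ ^ p) ^ (1 / p) ≤
      A * (1 - α * p) ^ (-(1 / p)) * R ^ (1 / p - α) := by
  have hβ : 0 < 1 - α * p := by linarith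
  have hle : ∫ t in Ioo 0 R, ‖g t‖ ^ p ≤ A ^ p * (R ^ (1 - α * p) / (1 - α * p)) := by
    calc ∫ t in Ioo 0 R, ‖g t‖ ^ p ≤ ∫ t in Ioo 0 R, A ^ p * t ^ (-(α * p)) :=
          integral_mono_of_nonneg (ae_of_all _ fun t ↦ by positivity)
            (integrableOn_Ioo_zero_const_mul_rpow (by linarith) hR _)
            (ae_restrict_of_forall_mem measurableSet_Ioo fun t ht ↦
              norm_rpow_le_mul_rpow_of_norm_le ht.1 hp.le hA (hg t ht))
      _ = A ^ p * (R ^ (1 - α * p) / (1 - α * p)) := by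
        rw [integral_const_mul, setIntegral_Ioo_zero_rpow (by linarith) hR.le, neg_add_eq_sub]
  calc (∫ t in Ioo 0 R, ‖g t‖ ^ p) ^ (1 / p)
      ≤ (A ^ p * (R ^ (1 - α * p) / (1 - α * p))) ^ (1 / p) := by gcongr
    _ = A * (1 - α * p) ^ (-(1 / p)) * R ^ (1 / p - α) := by
      rw [Real.mul_rpow (by positivity) (by positivity), one_div, Real.rpow_rpow_inv hA hp.ne',
        Real.div_rpow (by positivity) hβ.le, ← Real.rpow_mul hR.le, Real.rpow_neg hβ.le, sub_mul,
        mul_assoc α, mul_inv_cancel₀ hp.ne', one_mul, mul_one, div_eq_inv_mul, mul_assoc]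

end PowerWeight

theorem tendsto_const_mul_rpow_nhdsGT_zero (K : ℝ) {γ : ℝ} (hγ : 0 < γ) :
    Tendsto (fun R : ℝ ↦ K * R ^ γ) (nhdsWithin 0 (Ioi 0)) (nhds 0) := by
  have hcont : ContinuousAt (fun R : ℝ ↦ K * R ^ γ) 0 :=
    continuousAt_const.mul (Real.continuousAt_rpow_const 0 γ (.inr hγ.le))
  simpa [Real.zero_rpow hγ.ne'] using hcont.tendsto.mono_left nhdsWithin_le_nhds

theorem bergman_trace_estimate_general {X : Type*} [NormedAddCommGroup X] [NormedSpace ℂ X]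
    {θ q p : ℝ} (hθ : 0 < θ) (hq : 1 ≤ q) (hp : 0 < p) (hpq : 2 * p < q) :
    ∃ K > 0, ∀ R > 0, ∀ f : ℂ → X,
      DifferentiableOn ℂ f (sector θ) →
      IntegrableOn (fun z ↦ ‖f z‖ ^ q) (sector θ) →
      IntegrableOn (fun t : ℝ ↦ ‖f t‖ ^ p) (Ioo 0 R) ∧
        (∫ t in Ioo (0 : ℝ) R, ‖f t‖ ^ p) ^ (1 / p) ≤
          K * R ^ (1 / p - 2 / q) * (∫ z in sector θ, ‖f z‖ ^ q) ^ (1 / q) := by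
  obtain ⟨K, hK, hpointwise⟩ := exists_norm_le_mul_rpow_of_sector X hθ hq
  have hα : 2 / q * p < 1 := by rwa [div_mul_eq_mul_div, div_lt_one (by linarith)]
  have : 0 < 1 - 2 / q * p := by linarith
  refine ⟨K * (1 - 2 / q * p) ^ (-(1 / p)), by positivity, fun R hR f hf hfq ↦ ?_⟩
  have hA : 0 ≤ K * (∫ z in sector θ, ‖f z‖ ^ q) ^ (1 / q) := by positivity
  have hbound : ∀ t ∈ Ioo 0 R, ‖f t‖ ≤
      K * (∫ z in sector θ, ‖f z‖ ^ q) ^ (1 / q) * t ^ (-(2 / q)) :=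
    fun t ht ↦ hpointwise f hf hfq t ht.1
  have hcont : ContinuousOn (fun t : ℝ ↦ f t) (Ioo 0 R) :=
    hf.continuousOn.comp Complex.continuous_ofReal.continuousOn
      fun t ht ↦ ofReal_mem_sector hθ ht.1
  exact ⟨integrableOn_Ioo_norm_rpow_of_norm_le_mul_rpow
    (hcont.aestronglyMeasurable measurableSet_Ioo) hp.le hA hα hR hbound,
    (integral_Ioo_norm_rpow_rpow_le_of_norm_le_mul_rpow hp hA hα hR hbound).trans_eq
      (by ring)⟩

/-- trace estimate on `(0,R)` for Bergman-space functions, with a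
constant `C_R` (depending only on `R, θ, q, s`) tending to `0` as `R → 0⁺`. -/
theorem bergman_trace_estimate {X : Type*} [NormedAddCommGroup X] [NormedSpace ℂ X]
    [CompleteSpace X]
    (θ q s p : ℝ) (hθ0 : 0 < θ) (hθ : θ ≤ Real.pi / 2)
    (hq : 2 < q) (hs1 : 1 < s) (hs2 : s < 2)
    (hp : p = q * (s - 1) / s) (hp1 : 1 < p) :
    ∃ C : ℝ → ℝ, (∀ R > 0, 0 < C R) ∧
      Tendsto C (nhdsWithin 0 (Ioi 0)) (nhds 0) ∧
      ∀ R > 0, ∀ f : ℂ → X,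
        DifferentiableOn ℂ f (sector θ) →
        IntegrableOn (fun z => ‖f z‖ ^ q) (sector θ) →
        (∫ t in Ioo (0:ℝ) R, ‖f (t : ℂ)‖ ^ p) ^ (1 / p) ≤
          C R * (∫ z in sector θ, ‖f z‖ ^ q) ^ (1 / q) := by
  have hpq : 2 * p < q := by
    rw [hp, mul_div_assoc', div_lt_iff₀ (by linarith)]
    nlinarith
  have hγ : 0 < 1 / p - 2 / q := by
    rw [sub_pos, div_lt_div_iff₀ (by linarith) (by linarith), one_mul]
    exact hpq
  obtain ⟨K, hK, htrace⟩ :=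
    bergman_trace_estimate_general (X := X) hθ0 (by linarith) (by linarith) hpq
  exact ⟨fun R ↦ K * R ^ (1 / p - 2 / q), fun R (hR : 0 < R) ↦ by positivity,
    tendsto_const_mul_rpow_nhdsGT_zero K hγ, fun R hR f hf hfq ↦ (htrace R hR f hf hfq).2⟩
end

section
/- Let X be a complex Banach space, let 0 < θ ≤ π/2, let q > 2 and s ∈ (1,2), and set p := q(s-1)/s; assume p ≥ 1. Then there exists a constant C > 0, depending only on θ, q and s, such that for every R > 0 and every f in the Bergman space B^q_θ(X) one has ∫_0^R ‖f(t)‖_X^p dt ≤ C · R^{(2-s)/s} · ‖f‖_{B^q_θ(X)}^p; in particular the constant C_R := C^{1/p} R^{(2-s)/(sp)} in the trace estimate (∫_0^R ‖f(t)‖_X^p dt)^{1/p} ≤ C_R ‖f‖_{B^q_θ(X)} tends to 0 as R → 0⁺, since s < 2. -/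
open MeasureTheory Filter Set

/-!
The trace estimate comes from the sub-mean-value property. On a disc of radius `c * t` about `t > 0`
contained in the sector it gives `t * ‖f t‖ ^ q ≤ (π * c ^ 2 * t)⁻¹ * ∫ ‖f‖ ^ q`, the integral being
over the disc. Now integrate in `t` and interchange the integrals: a point `z` lies in the disc
about `t` only if `‖z‖ / (1 + c) < t < ‖z‖ / (1 - c)`, a set of `dt / t`-measure
`log ((1 + c) / (1 - c))` whatever `z` is. Hence `∫ t * ‖f t‖ ^ q dt` is controlled by
`∫ ‖f‖ ^ q` over the sector. Hölder's inequality with exponents `s` and `s' = s / (s - 1)`, applied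
to `‖f t‖ ^ (q / s') = t ^ (-1 / s') * (t * ‖f t‖ ^ q) ^ (1 / s')`, then produces the power of `R`
from `∫ t ^ (1 - s) dt` over `(0, R)`, which converges because `s < 2`.
-/

open Metric Real
open scoped ENNReal

section Lintegral

theorem laverage_rpow_le_laverage_rpow {α : Type*} [MeasurableSpace α] {μ : Measure α}
    [IsFiniteMeasure μ] {u : α → ℝ≥0∞} {q : ℝ} (hu : AEMeasurable u μ) (hq : 1 ≤ q) :
    (⨍⁻ x, u x ∂μ) ^ q ≤ ⨍⁻ x, u x ^ q ∂μ := by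
  have hq0 : 0 < q := by linarith
  rcases eq_zero_or_neZero μ with rfl | _
  · simp [hq0]
  · simpa [eLpNorm', laverage, ENNReal.le_rpow_inv_iff hq0] using
      eLpNorm'_le_eLpNorm'_of_exponent_le one_pos hq _
        (hu.smul_measure (μ univ)⁻¹).aestronglyMeasurable

theorem lintegral_Ioo_ofReal_rpow {a R : ℝ} (ha : -1 < a) (hR : 0 < R) :
    ∫⁻ t in Ioo 0 R, ENNReal.ofReal t ^ a = ENNReal.ofReal (R ^ (a + 1) / (a + 1)) := by
  have hint : IntegrableOn (fun t : ℝ => t ^ a) (Ioo 0 R) :=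
    (intervalIntegral.integrableOn_Ioo_rpow_iff hR).2 ha
  have hval : ∫ t in Ioo 0 R, t ^ a = R ^ (a + 1) / (a + 1) := by
    rw [← integral_Ioc_eq_integral_Ioo, ← intervalIntegral.integral_of_le hR.le,
      integral_rpow (Or.inl ha), zero_rpow (by linarith), sub_zero]
  rw [← hval, ofReal_integral_eq_lintegral_ofReal hint]
  · exact setLIntegral_congr_fun measurableSet_Ioo fun t ht => ENNReal.ofReal_rpow_of_pos ht.1
  · exact (ae_restrict_mem measurableSet_Ioo).mono fun t ht => rpow_nonneg ht.1.le a

theorem lintegral_Ioo_ofReal_inv {a b : ℝ} (ha : 0 < a) (hab : a ≤ b) :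
    ∫⁻ t in Ioo a b, (ENNReal.ofReal t)⁻¹ = ENNReal.ofReal (log (b / a)) := by
  have hint : IntegrableOn (fun t : ℝ => t⁻¹) (Ioo a b) :=
    (continuousOn_inv₀.mono fun t ht => (ha.trans_le ht.1).ne').integrableOn_Icc.mono_set
      Ioo_subset_Icc_self
  rw [← integral_inv_of_pos ha (ha.trans_le hab), intervalIntegral.integral_of_le hab,
    integral_Ioc_eq_integral_Ioo, ofReal_integral_eq_lintegral_ofReal hint]
  · exact setLIntegral_congr_fun measurableSet_Ioo fun t ht =>
      (ENNReal.ofReal_inv_of_pos (ha.trans ht.1)).symm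
  · exact (ae_restrict_mem measurableSet_Ioo).mono fun t ht => (inv_pos.2 (ha.trans ht.1)).le

theorem lintegral_rpow_le_lintegral_weight_mul {α : Type*} [MeasurableSpace α] {μ : Measure α}
    {s s' q : ℝ} (hs : s.HolderConjugate s') {w g : α → ℝ≥0∞} (hw : AEMeasurable w μ)
    (hw0 : ∀ᵐ x ∂μ, w x ≠ 0) (hwt : ∀ᵐ x ∂μ, w x ≠ ∞) (hg : AEMeasurable g μ) :
    ∫⁻ x, g x ^ (q / s') ∂μ ≤
      (∫⁻ x, w x ^ (1 - s) ∂μ) ^ (1 / s) * (∫⁻ x, w x * g x ^ q ∂μ) ^ (1 / s') := by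
  have hs' : s' ≠ 0 := hs.symm.ne_zero
  calc ∫⁻ x, g x ^ (q / s') ∂μ
      = ∫⁻ x, ((fun x => w x ^ (-(1 / s'))) * fun x => w x ^ (1 / s') * g x ^ (q / s')) x ∂μ := by
        refine lintegral_congr_ae ?_
        filter_upwards [hw0, hwt] with x h0 ht
        simp [← mul_assoc, ← ENNReal.rpow_add _ _ h0 ht]
    _ ≤ (∫⁻ x, (w x ^ (-(1 / s'))) ^ s ∂μ) ^ (1 / s) *
          (∫⁻ x, (w x ^ (1 / s') * g x ^ (q / s')) ^ s' ∂μ) ^ (1 / s') :=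
        ENNReal.lintegral_mul_le_Lp_mul_Lq μ hs (hw.pow_const _)
          ((hw.pow_const _).mul (hg.pow_const _))
    _ = _ := by
        have hexp : -(1 / s') * s = 1 - s := by
          rw [neg_mul, one_div_mul_eq_div, hs.div_conj_eq_sub_one, neg_sub]
        simp only [ENNReal.mul_rpow_of_nonneg _ _ hs.symm.nonneg, ← ENNReal.rpow_mul, hexp,
          one_div_mul_cancel hs', div_mul_cancel₀ _ hs', ENNReal.rpow_one]

theorem lintegral_Ioo_rpow_le {s s' q R : ℝ} (hs : s.HolderConjugate s') (hs2 : s < 2)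
    (hR : 0 < R) {g : ℝ → ℝ≥0∞} (hg : AEMeasurable g (volume.restrict (Ioo 0 R))) :
    ∫⁻ t in Ioo 0 R, g t ^ (q / s') ≤
      ENNReal.ofReal (R ^ (2 - s) / (2 - s)) ^ (1 / s) *
        (∫⁻ t in Ioo 0 R, ENNReal.ofReal t * g t ^ q) ^ (1 / s') := by
  have hw := lintegral_Ioo_ofReal_rpow (a := 1 - s) (by linarith) hR
  rw [show 1 - s + 1 = 2 - s by ring] at hw
  rw [← hw]
  refine lintegral_rpow_le_lintegral_weight_mul hs (by fun_prop) ?_ (by simp) hg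
  exact (ae_restrict_mem measurableSet_Ioo).mono fun t ht => by simpa using ht.1

theorem mem_Ioo_of_mem_ball_ray {E : Type*} [NormedAddCommGroup E] [NormedSpace ℝ E] {v z : E}
    (hv : ‖v‖ = 1) {c t : ℝ} (hc : c ∈ Ioo 0 1) (hz : z ∈ ball (t • v) (c * t)) :
    t ∈ Ioo (‖z‖ / (1 + c)) (‖z‖ / (1 - c)) := by
  obtain ⟨hc0, hc1⟩ := hc
  have ht : 0 < t := pos_of_mul_pos_right (pos_of_mem_ball hz) hc0.le
  have hnorm : ‖t • v‖ = t := by rw [norm_smul, hv, mul_one, norm_of_nonneg ht.le]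
  rw [mem_ball_iff_norm] at hz
  have hupper := norm_sub_norm_le z (t • v)
  have hlower := norm_sub_norm_le (t • v) z
  rw [norm_sub_rev] at hlower
  rw [mem_Ioo, div_lt_iff₀ (by linarith), lt_div_iff₀ (by linarith)]
  constructor <;> linarith

theorem lintegral_inv_mul_measure_ball_ray_le {E : Type*} [NormedAddCommGroup E] [NormedSpace ℝ E]
    [MeasurableSpace E] [OpensMeasurableSpace E] [SecondCountableTopology E]
    (ν : Measure E) [SFinite ν] {v : E} (hv : ‖v‖ = 1) {c : ℝ} (hc : c ∈ Ioo 0 1) :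
    ∫⁻ t in Ioi (0 : ℝ), (ENNReal.ofReal t)⁻¹ * ν (ball (t • v) (c * t)) ≤
      ENNReal.ofReal (log ((1 + c) / (1 - c))) * ν univ := by
  let A : Set (ℝ × E) := {x | dist x.2 (x.1 • v) < c * x.1}
  have hA : MeasurableSet A := (isOpen_lt (by fun_prop) (by fun_prop)).measurableSet
  let η : Measure ℝ := (volume.restrict (Ioi 0)).withDensity fun t => (ENNReal.ofReal t)⁻¹
  have hη (z : E) : η ((fun t => (t, z)) ⁻¹' A) ≤ ENNReal.ofReal (log ((1 + c) / (1 - c))) := by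
    obtain ⟨hc0, hc1⟩ := hc
    have : 0 < 1 - c := by linarith
    calc η ((fun t => (t, z)) ⁻¹' A) ≤ η (Ioo (‖z‖ / (1 + c)) (‖z‖ / (1 - c))) :=
          measure_mono fun t ht => mem_Ioo_of_mem_ball_ray hv ⟨hc0, hc1⟩ ht
      _ ≤ ∫⁻ t in Ioo (‖z‖ / (1 + c)) (‖z‖ / (1 - c)), (ENNReal.ofReal t)⁻¹ := by
          rw [withDensity_apply _ measurableSet_Ioo, Measure.restrict_restrict measurableSet_Ioo]
          exact lintegral_mono_set inter_subset_left
      _ ≤ ENNReal.ofReal (log ((1 + c) / (1 - c))) := by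
          rcases (norm_nonneg z).eq_or_lt with hz | hz
          · simp [← hz]
          · rw [lintegral_Ioo_ofReal_inv (by positivity) (by gcongr; linarith),
              div_div_div_cancel_left' _ _ hz.ne']
  calc ∫⁻ t in Ioi (0 : ℝ), (ENNReal.ofReal t)⁻¹ * ν (ball (t • v) (c * t))
      = ∫⁻ t, ν (Prod.mk t ⁻¹' A) ∂η :=
        (lintegral_withDensity_eq_lintegral_mul _ (by fun_prop)
          (measurable_measure_prodMk_left hA)).symm
    _ = ∫⁻ z, η ((fun t => (t, z)) ⁻¹' A) ∂ν := by
        rw [← Measure.prod_apply hA, Measure.prod_apply_symm hA]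
    _ ≤ ∫⁻ _, ENNReal.ofReal (log ((1 + c) / (1 - c))) ∂ν := lintegral_mono hη
    _ = _ := lintegral_const _

end Lintegral

section SubMeanValue

theorem circleAverage_eq_integral_Ioo {E : Type*} [NormedAddCommGroup E] [NormedSpace ℝ E]
    (f : ℂ → E) (c : ℂ) (ρ : ℝ) :
    circleAverage f c ρ = (2 * π)⁻¹ • ∫ φ in Ioo (-π) π, f (circleMap c ρ φ) := by
  rw [circleAverage_eq_integral_add (-π),
    intervalIntegral.integral_comp_add_right fun φ => f (circleMap c ρ φ),
    intervalIntegral.integral_of_le (by linarith [pi_pos]), integral_Ioc_eq_integral_Ioo]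
  ring_nf

theorem lintegral_eq_lintegral_circleMap {u : ℂ → ℝ≥0∞} (hu : Measurable u) (c : ℂ) :
    ∫⁻ z, u z =
      ∫⁻ ρ in Ioi 0, ENNReal.ofReal ρ * ∫⁻ φ in Ioo (-π) π, u (circleMap c ρ φ) := by
  have hmap (ρ φ : ℝ) : c + Complex.polarCoord.symm (ρ, φ) = circleMap c ρ φ := by
    simp [circleMap, Complex.exp_mul_I]
  have hcirc (ρ : ℝ) : Measurable fun φ => u (circleMap c ρ φ) :=
    hu.comp (continuous_circleMap c ρ).measurable
  have hmeas : Measurable fun x : ℝ × ℝ => ENNReal.ofReal x.1 * u (circleMap c x.1 x.2) := by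
    unfold circleMap
    fun_prop
  rw [← lintegral_add_left_eq_self u c, ← Complex.lintegral_comp_polarCoord_symm,
    polarCoord_target, Measure.volume_eq_prod, ← Measure.prod_restrict]
  simp only [hmap, smul_eq_mul]
  rw [lintegral_prod _ hmeas.aemeasurable]
  refine lintegral_congr fun ρ => ?_
  exact lintegral_const_mul (ENNReal.ofReal ρ) (hcirc ρ)

variable {X : Type*} [NormedAddCommGroup X] [NormedSpace ℂ X] {f : ℂ → X} {c : ℂ} {r ρ q : ℝ}

theorem enorm_mul_le_lintegral_circleMap (hf : DiffContOnCl ℂ f (ball c |ρ|)) :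
    ENNReal.ofReal (2 * π) * ‖f c‖ₑ ≤ ∫⁻ φ in Ioo (-π) π, ‖f (circleMap c ρ φ)‖ₑ := by
  -- Testing against a norming functional reduces to scalar `f`, so `X` need not be complete.
  obtain ⟨g, hg, hgc⟩ := exists_dual_vector'' ℂ (f c)
  have hmean : ∫ φ in Ioo (-π) π, g (f (circleMap c ρ φ)) = (2 * π) • g (f c) := by
    have := (g.differentiable.comp_diffContOnCl hf).circleAverage
    rw [circleAverage_eq_integral_Ioo, inv_smul_eq_iff₀ (by positivity)] at this
    exact this
  calc ENNReal.ofReal (2 * π) * ‖f c‖ₑ = ‖∫ φ in Ioo (-π) π, g (f (circleMap c ρ φ))‖ₑ := by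
        rw [hmean, hgc, enorm_smul, enorm_eq_ofReal (by positivity)]
        simp [enorm]
    _ ≤ ∫⁻ φ in Ioo (-π) π, ‖g (f (circleMap c ρ φ))‖ₑ := enorm_integral_le_lintegral_enorm _
    _ ≤ _ := lintegral_mono fun φ => (g.le_opENorm _).trans <| mul_le_of_le_one_left' <| by
          simpa [enorm] using! hg

theorem volume_ball_eq_ofReal (c : ℂ) (hr : 0 ≤ r) :
    volume (ball c r) = ENNReal.ofReal (π * r ^ 2) := by
  rw [Complex.volume_ball, ENNReal.coe_nnreal_eq, NNReal.coe_real_pi, mul_comm,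
    ← ENNReal.ofReal_pow hr, ← ENNReal.ofReal_mul pi_nonneg]

theorem enorm_le_laverage_ball (hf : DifferentiableOn ℂ f (ball c r)) (hr : 0 < r) :
    ‖f c‖ₑ ≤ ⨍⁻ z in ball c r, ‖f z‖ₑ ∂volume := by
  have hvol : volume (ball c r) = ENNReal.ofReal (r ^ 2 / 2) * ENNReal.ofReal (2 * π) := by
    rw [volume_ball_eq_ofReal c hr.le, ← ENNReal.ofReal_mul (by positivity)]
    ring_nf
  have hradial : ∫⁻ ρ in Ioo 0 r, ENNReal.ofReal ρ = ENNReal.ofReal (r ^ 2 / 2) := by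
    simpa [one_add_one_eq_two] using lintegral_Ioo_ofReal_rpow (a := 1) (by norm_num) hr
  have hmeas : Measurable ((ball c r).indicator fun z => ‖f z‖ₑ) := by
    classical
    rw [← piecewise_eq_indicator]
    exact hf.continuousOn.enorm.measurable_piecewise continuousOn_const measurableSet_ball
  have hcircle {ρ : ℝ} (hρ : ρ ∈ Ioo 0 r) : ENNReal.ofReal (2 * π) * ‖f c‖ₑ ≤
      ∫⁻ φ in Ioo (-π) π, (ball c r).indicator (fun z => ‖f z‖ₑ) (circleMap c ρ φ) := by
    have hsub : closedBall c ρ ⊆ ball c r := closedBall_subset_ball hρ.2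
    have hdiff : DiffContOnCl ℂ f (ball c |ρ|) := by
      rw [abs_of_pos hρ.1]
      exact (hf.mono hsub).diffContOnCl_ball subset_rfl
    refine (enorm_mul_le_lintegral_circleMap hdiff).trans_eq (lintegral_congr fun φ => ?_)
    rw [indicator_of_mem (hsub (circleMap_mem_closedBall c hρ.1.le φ))]
  rw [setLAverage_eq, ENNReal.le_div_iff_mul_le
    (.inl (measure_ball_pos _ _ hr).ne') (.inl measure_ball_lt_top.ne)]
  calc ‖f c‖ₑ * volume (ball c r)
      = ∫⁻ ρ in Ioo 0 r, ENNReal.ofReal ρ * (ENNReal.ofReal (2 * π) * ‖f c‖ₑ) := by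
        rw [lintegral_mul_const _ (by fun_prop), hradial, hvol, mul_comm, mul_assoc]
    _ ≤ ∫⁻ ρ in Ioo 0 r, ENNReal.ofReal ρ *
          ∫⁻ φ in Ioo (-π) π, (ball c r).indicator (fun z => ‖f z‖ₑ) (circleMap c ρ φ) :=
        setLIntegral_mono' measurableSet_Ioo fun ρ hρ => by gcongr; exact hcircle hρ
    _ ≤ ∫⁻ ρ in Ioi 0, ENNReal.ofReal ρ *
          ∫⁻ φ in Ioo (-π) π, (ball c r).indicator (fun z => ‖f z‖ₑ) (circleMap c ρ φ) :=
        lintegral_mono_set Ioo_subset_Ioi_self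
    _ = ∫⁻ z in ball c r, ‖f z‖ₑ := by
        rw [← lintegral_eq_lintegral_circleMap hmeas, lintegral_indicator measurableSet_ball]

theorem enorm_rpow_le_laverage_ball (hf : DifferentiableOn ℂ f (ball c r)) (hr : 0 < r)
    (hq : 1 ≤ q) : ‖f c‖ₑ ^ q ≤ ⨍⁻ z in ball c r, ‖f z‖ₑ ^ q ∂volume := by
  have : IsFiniteMeasure (volume.restrict (ball c r)) :=
    isFiniteMeasure_restrict.2 measure_ball_lt_top.ne
  have hmeas : AEMeasurable (fun z => ‖f z‖ₑ) (volume.restrict (ball c r)) :=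
    hf.continuousOn.enorm.aemeasurable measurableSet_ball
  calc ‖f c‖ₑ ^ q ≤ (⨍⁻ z in ball c r, ‖f z‖ₑ ∂volume) ^ q := by
        gcongr
        exact enorm_le_laverage_ball hf hr
    _ ≤ _ := laverage_rpow_le_laverage_rpow hmeas hq

end SubMeanValue

section Trace

theorem exists_ball_subset_sector {θ : ℝ} (hθ : 0 < θ) :
    ∃ c ∈ Ioo (0 : ℝ) 1, ∀ t : ℝ, 0 < t → ball (t : ℂ) (c * t) ⊆ sector θ := by
  have harg : ∀ᶠ w in nhds (1 : ℂ), |w.arg| < θ :=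
    (Complex.continuousAt_arg (by simp)).abs.eventually_lt_const (by simpa)
  have hsector : ∀ᶠ w in nhds (1 : ℂ), w ∈ sector θ := (eventually_ne_nhds one_ne_zero).and harg
  obtain ⟨ε, hε, hball⟩ := eventually_nhds_iff_ball.1 hsector
  refine ⟨min ε (1 / 2), ⟨by positivity, by simp; norm_num⟩, fun t ht z hz => ?_⟩
  have ht' : (t : ℂ) ≠ 0 := by exact_mod_cast ht.ne'
  have hzt : z / t ∈ ball (1 : ℂ) ε := by
    rw [mem_ball_iff_norm, div_sub_one ht', norm_div, Complex.norm_of_nonneg ht.le, div_lt_iff₀ ht]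
    calc ‖z - t‖ < min ε (1 / 2) * t := mem_ball_iff_norm.1 hz
      _ ≤ ε * t := by gcongr; exact min_le_left _ _
  obtain ⟨hne, harg⟩ := hball _ hzt
  rw [← Complex.arg_real_mul _ ht, mul_div_cancel₀ _ ht'] at harg
  exact ⟨(div_ne_zero_iff.1 hne).1, harg⟩

/-- The constant of the weighted embedding on the positive axis (`lintegral_Ioi_mul_enorm_rpow_le`)
for a cone swept by balls of aperture `c`: the `dt / t`-length of the set of radii whose ball covers
a given point, divided by the area of a ball of radius `c`. -/
noncomputable def coneConstant (c : ℝ) : ℝ := log ((1 + c) / (1 - c)) / (π * c ^ 2)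

theorem coneConstant_pos {c : ℝ} (hc : c ∈ Ioo 0 1) : 0 < coneConstant c := by
  obtain ⟨hc0, hc1⟩ := hc
  have hlog : 0 < log ((1 + c) / (1 - c)) :=
    log_pos ((one_lt_div (sub_pos.2 hc1)).2 (by linarith))
  unfold coneConstant
  positivity

variable {X : Type*} [NormedAddCommGroup X] [NormedSpace ℂ X] {f : ℂ → X} {S : Set ℂ}
  {c q s s' t R : ℝ}

theorem ofReal_mul_enorm_rpow_le (hc : 0 < c) (ht : 0 < t)
    (hf : DifferentiableOn ℂ f (ball (t : ℂ) (c * t))) (hq : 1 ≤ q) :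
    ENNReal.ofReal t * ‖f t‖ₑ ^ q ≤ ENNReal.ofReal (π * c ^ 2)⁻¹ *
      ((ENNReal.ofReal t)⁻¹ * ∫⁻ z in ball (t : ℂ) (c * t), ‖f z‖ₑ ^ q) := by
  have hmean := enorm_rpow_le_laverage_ball hf (by positivity) hq
  rw [setLAverage_eq, volume_ball_eq_ofReal _ (by positivity), ENNReal.div_eq_inv_mul,
    ← ENNReal.ofReal_inv_of_pos (by positivity)] at hmean
  calc ENNReal.ofReal t * ‖f t‖ₑ ^ q
      ≤ ENNReal.ofReal t * (ENNReal.ofReal (π * (c * t) ^ 2)⁻¹ *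
          ∫⁻ z in ball (t : ℂ) (c * t), ‖f z‖ₑ ^ q) := by gcongr
    _ = _ := by
        rw [← ENNReal.ofReal_inv_of_pos ht, ← mul_assoc, ← mul_assoc,
          ← ENNReal.ofReal_mul ht.le, ← ENNReal.ofReal_mul (by positivity)]
        congr 2
        field_simp

theorem lintegral_Ioi_mul_enorm_rpow_le (hc : c ∈ Ioo 0 1)
    (hS : ∀ t : ℝ, 0 < t → ball (t : ℂ) (c * t) ⊆ S) (hf : DifferentiableOn ℂ f S) (hq : 1 ≤ q) :
    ∫⁻ t in Ioi (0 : ℝ), ENNReal.ofReal t * ‖f t‖ₑ ^ q ≤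
      ENNReal.ofReal (coneConstant c) * ∫⁻ z in S, ‖f z‖ₑ ^ q := by
  have hc0 := hc.1
  let ν : Measure ℂ := (volume.restrict S).withDensity fun z => ‖f z‖ₑ ^ q
  have hν {t : ℝ} (ht : 0 < t) :
      ∫⁻ z in ball (t : ℂ) (c * t), ‖f z‖ₑ ^ q = ν (ball (t : ℂ) (c * t)) := by
    rw [withDensity_apply _ measurableSet_ball, Measure.restrict_restrict measurableSet_ball,
      inter_eq_left.2 (hS t ht)]
  calc ∫⁻ t in Ioi (0 : ℝ), ENNReal.ofReal t * ‖f t‖ₑ ^ q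
      ≤ ENNReal.ofReal (π * c ^ 2)⁻¹ *
          ∫⁻ t in Ioi (0 : ℝ), (ENNReal.ofReal t)⁻¹ * ν (ball (t : ℂ) (c * t)) := by
        rw [← lintegral_const_mul' _ _ ENNReal.ofReal_ne_top]
        refine setLIntegral_mono' measurableSet_Ioi fun t ht => ?_
        rw [← hν ht]
        exact ofReal_mul_enorm_rpow_le hc0 ht (hf.mono (hS t ht)) hq
    _ ≤ ENNReal.ofReal (π * c ^ 2)⁻¹ * (ENNReal.ofReal (log ((1 + c) / (1 - c))) * ν univ) := by
        gcongr
        simpa using lintegral_inv_mul_measure_ball_ray_le ν (norm_one (α := ℂ)) hc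
    _ = _ := by
        rw [← mul_assoc, ← ENNReal.ofReal_mul (by positivity), inv_mul_eq_div, ← coneConstant,
          withDensity_apply _ MeasurableSet.univ, Measure.restrict_univ]

theorem lintegral_Ioo_enorm_rpow_le (hc : c ∈ Ioo 0 1)
    (hS : ∀ t : ℝ, 0 < t → ball (t : ℂ) (c * t) ⊆ S) (hf : DifferentiableOn ℂ f S) (hq : 1 ≤ q)
    (hs : s.HolderConjugate s') (hs2 : s < 2) (hR : 0 < R) :
    ∫⁻ t in Ioo 0 R, ‖f t‖ₑ ^ (q / s') ≤ ENNReal.ofReal (R ^ (2 - s) / (2 - s)) ^ (1 / s) *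
      (ENNReal.ofReal (coneConstant c) * ∫⁻ z in S, ‖f z‖ₑ ^ q) ^ (1 / s') := by
  have hmaps : MapsTo ((↑) : ℝ → ℂ) (Ioo 0 R) S := fun t ht =>
    hS t ht.1 (mem_ball_self (mul_pos hc.1 ht.1))
  have hmeas : AEMeasurable (fun t : ℝ => ‖f t‖ₑ) (volume.restrict (Ioo 0 R)) :=
    (hf.continuousOn.comp Complex.continuous_ofReal.continuousOn hmaps).enorm.aemeasurable
      measurableSet_Ioo
  have hs' : 0 ≤ 1 / s' := hs.symm.one_div_nonneg
  refine (lintegral_Ioo_rpow_le hs hs2 hR hmeas).trans ?_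
  gcongr
  exact (lintegral_mono_set Ioo_subset_Ioi_self).trans
    (lintegral_Ioi_mul_enorm_rpow_le hc hS hf hq)

theorem enorm_norm_rpow {E : Type*} [SeminormedAddCommGroup E] (x : E) {a : ℝ} (ha : 0 ≤ a) :
    ‖‖x‖ ^ a‖ₑ = ‖x‖ₑ ^ a := by
  rw [enorm_rpow_of_nonneg (norm_nonneg x) ha, enorm_norm]

theorem integral_Ioo_norm_rpow_le (hc : c ∈ Ioo 0 1)
    (hS : ∀ t : ℝ, 0 < t → ball (t : ℂ) (c * t) ⊆ S) (hf : DifferentiableOn ℂ f S) (hq : 1 ≤ q)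
    (hint : IntegrableOn (fun z => ‖f z‖ ^ q) S) (hs : s.HolderConjugate s') (hs2 : s < 2)
    (hR : 0 < R) :
    ∫ t in Ioo 0 R, ‖f t‖ ^ (q / s') ≤
      (R ^ (2 - s) / (2 - s)) ^ (1 / s) * (coneConstant c * ∫ z in S, ‖f z‖ ^ q) ^ (1 / s') := by
  have hq0 : 0 ≤ q := by linarith
  have hp0 : 0 ≤ q / s' := div_nonneg hq0 hs.symm.nonneg
  have : 0 < 2 - s := by linarith
  have hK := (coneConstant_pos hc).le
  have hs0 := hs.one_div_nonneg
  have hs0' := hs.symm.one_div_nonneg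
  have hS_eq : ∫⁻ z in S, ‖f z‖ₑ ^ q = ENNReal.ofReal (∫ z in S, ‖f z‖ ^ q) := by
    simpa only [enorm_norm_rpow _ hq0, norm_of_nonneg (rpow_nonneg (norm_nonneg _) q)] using
      (ofReal_integral_norm_eq_lintegral_enorm hint).symm
  have haxis_le : ENNReal.ofReal (∫ t in Ioo 0 R, ‖f t‖ ^ (q / s')) ≤
      ∫⁻ t in Ioo 0 R, ‖f t‖ₑ ^ (q / s') := by
    rw [← enorm_of_nonneg (by positivity)]
    exact (enorm_integral_le_lintegral_enorm _).trans_eq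
      (lintegral_congr fun t => enorm_norm_rpow _ hp0)
  have htrace := haxis_le.trans (lintegral_Ioo_enorm_rpow_le hc hS hf hq hs hs2 hR)
  rwa [hS_eq, ← ENNReal.ofReal_mul hK,
    ENNReal.ofReal_rpow_of_nonneg (by positivity) hs0,
    ENNReal.ofReal_rpow_of_nonneg (by positivity) hs0', ← ENNReal.ofReal_mul (by positivity),
    ENNReal.ofReal_le_ofReal_iff (by positivity)] at htrace

end Trace

theorem rpow_one_div_le_of_le_mul_rpow {I C R N a p : ℝ} (hI : 0 ≤ I) (hC : 0 ≤ C) (hR : 0 ≤ R)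
    (hN : 0 ≤ N) (hp : 0 < p) (h : I ≤ C * R ^ a * N ^ p) :
    I ^ (1 / p) ≤ C ^ (1 / p) * R ^ (a / p) * N := by
  calc I ^ (1 / p) ≤ (C * R ^ a * N ^ p) ^ (1 / p) := by gcongr
    _ = C ^ (1 / p) * R ^ (a / p) * N := by
        rw [mul_rpow (by positivity) (by positivity), mul_rpow hC (by positivity),
          ← rpow_mul hR, ← rpow_mul hN, mul_one_div, mul_one_div_cancel hp.ne', rpow_one]

theorem bergman_trace_estimate_quantitative_general.{u} (θ q s p : ℝ) (hθ : 0 < θ) (hq : 1 ≤ q)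
    (hs1 : 1 < s) (hs2 : s < 2) (hp : p = q * (s - 1) / s) :
    ∃ C > (0 : ℝ),
      Tendsto (fun R : ℝ => C ^ (1 / p) * R ^ ((2 - s) / (s * p))) (nhdsWithin 0 (Ioi 0))
        (nhds 0) ∧
      ∀ (X : Type u) [NormedAddCommGroup X] [NormedSpace ℂ X], ∀ R > 0, ∀ f : ℂ → X,
        DifferentiableOn ℂ f (sector θ) →
        IntegrableOn (fun z => ‖f z‖ ^ q) (sector θ) →
        (∫ t in Ioo (0 : ℝ) R, ‖f t‖ ^ p) ≤
            C * R ^ ((2 - s) / s) * ((∫ z in sector θ, ‖f z‖ ^ q) ^ (1 / q)) ^ p ∧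
          (∫ t in Ioo (0 : ℝ) R, ‖f t‖ ^ p) ^ (1 / p) ≤
            C ^ (1 / p) * R ^ ((2 - s) / (s * p)) *
              (∫ z in sector θ, ‖f z‖ ^ q) ^ (1 / q) := by
  obtain ⟨c, hc, hball⟩ := exists_ball_subset_sector hθ
  have hs : s.HolderConjugate (s / (s - 1)) := .conjExponent hs1
  have hpq : p = q / (s / (s - 1)) := by rw [hp, div_div_eq_mul_div]
  have hp0 : 0 < p := hpq ▸ div_pos (by linarith) hs.symm.pos
  have h2s : 0 < 2 - s := by linarith
  have hK := coneConstant_pos hc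
  have hexp : 0 < (2 - s) / (s * p) := div_pos h2s (mul_pos hs.pos hp0)
  let C := (1 / (2 - s)) ^ (1 / s) * coneConstant c ^ (1 / (s / (s - 1)))
  have hC : 0 < C := by positivity
  refine ⟨C, hC, ?_, fun X _ _ R hR f hf hint => ?_⟩
  · have hlim := ((continuous_rpow_const hexp.le).tendsto' 0 0 (zero_rpow hexp.ne')).const_mul
      (C ^ (1 / p))
    rw [mul_zero] at hlim
    exact hlim.mono_left nhdsWithin_le_nhds
  · set N := ∫ z in sector θ, ‖f z‖ ^ q
    have hN : 0 ≤ N := integral_nonneg fun z => by positivity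
    have htrace : ∫ t in Ioo 0 R, ‖f t‖ ^ p ≤ C * R ^ ((2 - s) / s) * (N ^ (1 / q)) ^ p := by
      rw [hpq]
      refine (integral_Ioo_norm_rpow_le hc hball hf hq hint hs hs2 hR).trans_eq ?_
      rw [div_eq_mul_one_div (R ^ (2 - s)), mul_rpow (by positivity) (by positivity),
        mul_rpow hK.le hN, ← rpow_mul hR.le, ← rpow_mul hN, mul_one_div,
        one_div_mul_eq_div q, div_div_cancel_left' (by linarith), ← one_div]
      ring
    have hroot := rpow_one_div_le_of_le_mul_rpow (integral_nonneg fun t => by positivity) hC.le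
      hR.le (by positivity) hp0 htrace
    exact ⟨htrace, div_div (2 - s) s p ▸ hroot⟩

/-- quantitative trace estimate: there is `C > 0`, depending only on
`θ, q, s`, with `∫_0^R ‖f(t)‖^p dt ≤ C R^((2-s)/s) ‖f‖_{B^q_θ}^p` for all `R > 0`
and all `f` in the Bergman space; in particular `C_R := C^(1/p) R^((2-s)/(s p))`
tends to `0` as `R → 0⁺` and serves in the corresponding trace estimate. -/
theorem bergman_trace_estimate_quantitative {X : Type*} [NormedAddCommGroup X]
    [NormedSpace ℂ X] [CompleteSpace X]
    (θ q s p : ℝ) (hθ0 : 0 < θ) (hθ : θ ≤ Real.pi / 2)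
    (hq : 2 < q) (hs1 : 1 < s) (hs2 : s < 2)
    (hp : p = q * (s - 1) / s) (hp1 : 1 ≤ p) :
    ∃ C > (0:ℝ),
      (∀ R > 0, ∀ f : ℂ → X,
        DifferentiableOn ℂ f (sector θ) →
        IntegrableOn (fun z => ‖f z‖ ^ q) (sector θ) →
        (∫ t in Ioo (0:ℝ) R, ‖f (t : ℂ)‖ ^ p) ≤
          C * R ^ ((2 - s) / s) * ((∫ z in sector θ, ‖f z‖ ^ q) ^ (1 / q)) ^ p) ∧
      Tendsto (fun R : ℝ => C ^ (1 / p) * R ^ ((2 - s) / (s * p)))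
        (nhdsWithin 0 (Ioi 0)) (nhds 0) ∧
      (∀ R > 0, ∀ f : ℂ → X,
        DifferentiableOn ℂ f (sector θ) →
        IntegrableOn (fun z => ‖f z‖ ^ q) (sector θ) →
        (∫ t in Ioo (0:ℝ) R, ‖f (t : ℂ)‖ ^ p) ^ (1 / p) ≤
          C ^ (1 / p) * R ^ ((2 - s) / (s * p)) *
            (∫ z in sector θ, ‖f z‖ ^ q) ^ (1 / q)) := by
  obtain ⟨C, hC, hlim, hX⟩ :=
    bergman_trace_estimate_quantitative_general θ q s p hθ0 (by linarith) hs1 hs2 hp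
  exact ⟨C, hC, fun R hR f hf hint => (hX X R hR f hf hint).1, hlim,
    fun R hR f hf hint => (hX X R hR f hf hint).2⟩
end

section
/- Let X be a complex Banach space, let 0 < θ < π/2, set a := tan θ, let α ∈ (0, π/2), set c := cos α, and assume a·c < 1. Let p ≥ 1, let r > 0, and suppose that the closed lens L := {z ∈ ℂ : |z − r(1−ac)| ≤ ar} ∩ {z ∈ ℂ : |z − r(1+ac)| ≤ ar} is contained in Σ_θ. Then every holomorphic function f : Σ_θ → X satisfies the pointwise Cauchy-type estimate ‖f(r)‖_X^p ≤ (4α)^{p−1}/(2π(1−c))^p · ( ∫_{−α}^{α} ‖f(r(1−ac) + ar e^{it})‖_X^p dt + ∫_{−α}^{α} ‖f(r(1+ac) − ar e^{it})‖_X^p dt ). -/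
open MeasureTheory Set

/-!
Let `w` run along the arc from `w (-α)` to `w α = -w (-α)`, so that `z₀ + w` and `z₀ - w` together
bound the lens. The difference quotient `h z = (f z - f z₀) / (z - z₀)` is holomorphic on the lens,
which is convex, so `h` has a primitive there and its integral over the boundary vanishes:
`∫ (w' / w) (f (z₀ + w) + f (z₀ - w) - 2 f z₀) = 0`. As `∫ w' / w = π i`, this is Cauchy's formula
`2 π i f z₀ = ∫ (w' / w) (f (z₀ + w) + f (z₀ - w))`. On the arc `|w' / w| ≤ 1 / (1 - cos α)`, and
Jensen's inequality then passes to `p`-th powers.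
-/

section PowerMean

lemma add_rpow_le_two_rpow_mul {x y p : ℝ} (hx : 0 ≤ x) (hy : 0 ≤ y) (hp : 1 ≤ p) :
    (x + y) ^ p ≤ 2 ^ (p - 1) * (x ^ p + y ^ p) := by
  lift x to NNReal using hx
  lift y to NNReal using hy
  exact_mod_cast NNReal.rpow_add_le_mul_rpow_add_rpow x y hp

lemma rpow_integral_le_mul_integral_rpow {Ω : Type*} [MeasurableSpace Ω] {μ : Measure Ω}
    [IsFiniteMeasure μ] {p : ℝ} (hp : 1 ≤ p) {g : Ω → ℝ} (hg : ∀ x, 0 ≤ g x)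
    (hgi : Integrable g μ) (hgp : Integrable (fun x => g x ^ p) μ) :
    (∫ x, g x ∂μ) ^ p ≤ μ.real univ ^ (p - 1) * ∫ x, g x ^ p ∂μ := by
  rcases eq_zero_or_neZero μ with rfl | _
  · simp [Real.zero_rpow (by linarith : p ≠ 0)]
  have hμ : 0 < μ.real univ := by simp [measureReal_def, ENNReal.toReal_pos_iff, NeZero.pos]
  have jensen := (convexOn_rpow hp).map_average_le
    (Real.continuous_rpow_const (by linarith)).continuousOn isClosed_Ici (.of_forall hg) hgi hgp
  rw [average_eq, average_eq, smul_eq_mul, smul_eq_mul,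
    Real.mul_rpow (by positivity) (integral_nonneg hg), Real.inv_rpow hμ.le,
    inv_mul_le_iff₀ (by positivity)] at jensen
  rw [Real.rpow_sub_one hμ.ne']
  calc _ ≤ _ := jensen
    _ = _ := by ring

lemma rpow_intervalIntegral_add_le {a b p : ℝ} (hab : a ≤ b) (hp : 1 ≤ p) {g₁ g₂ : ℝ → ℝ}
    (hg₁ : ∀ t, 0 ≤ g₁ t) (hg₂ : ∀ t, 0 ≤ g₂ t) (hc₁ : ContinuousOn g₁ (Icc a b))
    (hc₂ : ContinuousOn g₂ (Icc a b)) :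
    (∫ t in a..b, g₁ t + g₂ t) ^ p ≤
      (2 * (b - a)) ^ (p - 1) * ((∫ t in a..b, g₁ t ^ p) + ∫ t in a..b, g₂ t ^ p) := by
  have integrable_of_continuousOn {g : ℝ → ℝ} (hg : ContinuousOn g (Icc a b)) :
      IntervalIntegrable g volume a b := hg.intervalIntegrable_of_Icc hab
  have continuousOn_rpow {g : ℝ → ℝ} (hg : ContinuousOn g (Icc a b)) :
      ContinuousOn (fun t => g t ^ p) (Icc a b) := hg.rpow_const fun _ _ => .inr (by linarith)
  have hsum := continuousOn_rpow (hc₁.add hc₂)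
  calc (∫ t in a..b, g₁ t + g₂ t) ^ p
      ≤ (b - a) ^ (p - 1) * ∫ t in a..b, (g₁ t + g₂ t) ^ p := by
        simpa [intervalIntegral.integral_of_le hab, hab] using
          rpow_integral_le_mul_integral_rpow (μ := volume.restrict (Ioc a b)) hp
            (fun t => add_nonneg (hg₁ t) (hg₂ t))
            (integrable_of_continuousOn (hc₁.add hc₂)).1 (integrable_of_continuousOn hsum).1
    _ ≤ (b - a) ^ (p - 1) * ∫ t in a..b, 2 ^ (p - 1) * (g₁ t ^ p + g₂ t ^ p) := by
        gcongr
        exact intervalIntegral.integral_mono hab (integrable_of_continuousOn hsum)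
          (integrable_of_continuousOn (continuousOn_const.mul
            ((continuousOn_rpow hc₁).add (continuousOn_rpow hc₂))))
          fun t => add_rpow_le_two_rpow_mul (hg₁ t) (hg₂ t) hp
    _ = _ := by
        rw [intervalIntegral.integral_const_mul, intervalIntegral.integral_add
          (integrable_of_continuousOn (continuousOn_rpow hc₁))
          (integrable_of_continuousOn (continuousOn_rpow hc₂)),
          Real.mul_rpow zero_le_two (sub_nonneg.2 hab)]
        ring

end PowerMean

section CauchyFormula

variable {X : Type*} [NormedAddCommGroup X] [NormedSpace ℂ X] [CompleteSpace X] {K : Set ℂ}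
  {a b : ℝ}

lemma integral_deriv_smul_comp_eq_sub_of_hasDerivWithinAt {H h : ℂ → X} {γ γ' : ℝ → ℂ}
    (hab : a ≤ b) (hH : ∀ z ∈ K, HasDerivWithinAt H (h z) K z) (hh : ContinuousOn h K)
    (hγ : ∀ t ∈ Icc a b, HasDerivAt γ (γ' t) t) (hγ' : ContinuousOn γ' (Icc a b))
    (hγK : MapsTo γ (Icc a b) K) :
    ∫ t in a..b, γ' t • h (γ t) = H (γ b) - H (γ a) := by
  have hcomp : ∀ t ∈ Icc a b, HasDerivWithinAt (H ∘ γ) (γ' t • h (γ t)) (Icc a b) t :=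
    fun t ht => (hH _ (hγK ht)).scomp t (hγ t ht).hasDerivWithinAt hγK
  refine intervalIntegral.integral_eq_sub_of_hasDerivAt_of_le hab
    (fun t ht => (hcomp t ht).continuousWithinAt)
    (fun t ht => (hcomp t (Ioo_subset_Icc_self ht)).hasDerivAt (Icc_mem_nhds ht.1 ht.2)) ?_
  exact (hγ'.smul (hh.comp (HasDerivAt.continuousOn hγ) hγK)).intervalIntegrable_of_Icc hab

variable {f : ℂ → X} {z₀ : ℂ} {w : ℝ → ℂ}

lemma integral_deriv_smul_sub_eq_zero_of_convex (hK : Convex ℝ K) (hf : DifferentiableOn ℂ f K)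
    (hab : a ≤ b) (hw : ∀ t ∈ Icc a b, DifferentiableAt ℝ w t)
    (hw' : ContinuousOn (deriv w) (Icc a b)) (hends : w a = -w b)
    (hadd : MapsTo (fun t => z₀ + w t) (Icc a b) K)
    (hsub : MapsTo (fun t => z₀ - w t) (Icc a b) K) :
    ∫ t in a..b, deriv w t • (f (z₀ + w t) - f (z₀ - w t)) = 0 := by
  obtain ⟨F, hF⟩ := hK.exists_forall_hasDerivWithinAt hf
  have hwc := HasDerivAt.continuousOn fun t ht => (hw t ht).hasDerivAt
  have hfc := hf.continuousOn
  have integral_add_arc := integral_deriv_smul_comp_eq_sub_of_hasDerivWithinAt hab hF hfc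
    (fun t ht => (hw t ht).hasDerivAt.const_add z₀) hw' hadd
  have integral_sub_arc := integral_deriv_smul_comp_eq_sub_of_hasDerivWithinAt hab hF hfc
    (fun t ht => (hw t ht).hasDerivAt.const_sub z₀) hw'.neg hsub
  have integrable_smul {γ : ℝ → ℂ} (hγ : ContinuousOn γ (Icc a b)) (hγK : MapsTo γ (Icc a b) K) :
      IntervalIntegrable (fun t => deriv w t • f (γ t)) volume a b :=
    (hw'.smul (hfc.comp hγ hγK)).intervalIntegrable_of_Icc hab
  simp only [neg_smul, intervalIntegral.integral_neg, neg_eq_iff_eq_neg] at integral_sub_arc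
  simp only [smul_sub]
  rw [intervalIntegral.integral_sub (integrable_smul (by fun_prop) hadd)
    (integrable_smul (by fun_prop) hsub), integral_add_arc, integral_sub_arc, hends,
    ← sub_eq_add_neg z₀, sub_neg_eq_add, sub_neg_eq_add, sub_add_sub_cancel, sub_self]

lemma integral_logDeriv_smul_add_eq_of_convex (hK : Convex ℝ K) (hz₀ : K ∈ nhds z₀)
    (hf : DifferentiableOn ℂ f K) (hab : a ≤ b) (hw : ∀ t ∈ Icc a b, DifferentiableAt ℝ w t)
    (hw' : ContinuousOn (deriv w) (Icc a b)) (hends : w a = -w b)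
    (hslit : ∀ t ∈ Icc a b, w t ∈ Complex.slitPlane)
    (hadd : MapsTo (fun t => z₀ + w t) (Icc a b) K)
    (hsub : MapsTo (fun t => z₀ - w t) (Icc a b) K) :
    ∫ t in a..b, logDeriv w t • (f (z₀ + w t) + f (z₀ - w t)) =
      (2 * (Complex.log (w b) - Complex.log (w a))) • f z₀ := by
  have hne : ∀ t ∈ Icc a b, w t ≠ 0 := fun t ht => Complex.slitPlane_ne_zero (hslit t ht)
  have hwc := HasDerivAt.continuousOn fun t ht => (hw t ht).hasDerivAt
  have hlog' : ContinuousOn (fun t => logDeriv w t) (Icc a b) := hw'.div hwc hne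
  have hfc := hf.continuousOn
  have integral_logDeriv : ∫ t in a..b, logDeriv w t = Complex.log (w b) - Complex.log (w a) := by
    refine intervalIntegral.integral_eq_sub_of_hasDerivAt (f := fun t => Complex.log (w t)) ?_
      (hlog'.intervalIntegrable_of_Icc hab)
    rw [uIcc_of_le hab]
    exact fun t ht => (hw t ht).hasDerivAt.clog_real (hslit t ht)
  have integral_dslope := integral_deriv_smul_sub_eq_zero_of_convex hK
    ((Complex.differentiableOn_dslope hz₀).2 hf) hab hw hw' hends hadd hsub
  have smul_dslope : ∀ t ∈ Icc a b,
      deriv w t • (dslope f z₀ (z₀ + w t) - dslope f z₀ (z₀ - w t)) =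
        logDeriv w t • (f (z₀ + w t) + f (z₀ - w t)) - logDeriv w t • (2 : ℂ) • f z₀ := by
    intro t ht
    rw [dslope_of_ne _ (by simpa using hne t ht), dslope_of_ne _ (by simpa using hne t ht),
      slope_def_module, slope_def_module, logDeriv_apply, add_sub_cancel_left,
      sub_sub_cancel_left, inv_neg, div_eq_mul_inv, two_smul]
    module
  rw [intervalIntegral.integral_congr (by rwa [← uIcc_of_le hab] at smul_dslope),
    intervalIntegral.integral_sub, sub_eq_zero] at integral_dslope
  · rw [integral_dslope, intervalIntegral.integral_smul_const, integral_logDeriv, smul_smul,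
      mul_comm]
  · exact (hlog'.smul ((hfc.comp (by fun_prop) hadd).add
      (hfc.comp (by fun_prop) hsub))).intervalIntegrable_of_Icc hab
  · exact (hlog'.smul continuousOn_const).intervalIntegrable_of_Icc hab

end CauchyFormula

/-- The closed lens centred at `z₀` that is bounded by two circular arcs of radius `R` and opening
half-angle `α`: the intersection of the disks of radius `R` centred at `z₀ ± R cos α`. -/
def closedLens (z₀ : ℂ) (R α : ℝ) : Set ℂ :=
  Metric.closedBall (z₀ - (R * Real.cos α : ℝ)) R ∩ Metric.closedBall (z₀ + (R * Real.cos α : ℝ)) R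

/-- The right boundary arc `R (e^{it} - cos α)`, `|t| ≤ α`, of the closed lens centred at `0`. The
boundary of `closedLens z₀ R α` consists of `z₀ + lensArc R α t` and `z₀ - lensArc R α t`. -/
noncomputable def lensArc (R α t : ℝ) : ℂ := circleMap (-(R * Real.cos α : ℝ)) R t

section Lens

variable {z₀ : ℂ} {R α t : ℝ}

lemma mem_closedLens_iff {z : ℂ} : z ∈ closedLens z₀ R α ↔
    ‖z - z₀ + (R * Real.cos α : ℝ)‖ ≤ R ∧ ‖z - z₀ - (R * Real.cos α : ℝ)‖ ≤ R := by
  rw [closedLens, mem_inter_iff, mem_closedBall_iff_norm, mem_closedBall_iff_norm,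
    sub_sub_eq_add_sub, add_sub_right_comm, sub_add_eq_sub_sub]

lemma convex_closedLens : Convex ℝ (closedLens z₀ R α) :=
  (convex_closedBall _ _).inter (convex_closedBall _ _)

lemma abs_cos_lt_one_of_mem_Ioo (hα : α ∈ Ioo 0 Real.pi) : |Real.cos α| < 1 := by
  rw [← sq_lt_one_iff_abs_lt_one, Real.cos_sq']
  exact sub_lt_self _ (pow_pos (Real.sin_pos_of_mem_Ioo hα) 2)

lemma closedLens_mem_nhds (hR : 0 < R) (hα : |Real.cos α| < 1) : closedLens z₀ R α ∈ nhds z₀ := by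
  have abs_lt_radius : |R * Real.cos α| < R := by
    rw [abs_mul, abs_of_pos hR]
    exact mul_lt_of_lt_one_right hR hα
  refine Filter.inter_mem (Metric.closedBall_mem_nhds_of_mem ?_)
    (Metric.closedBall_mem_nhds_of_mem ?_)
  · rwa [Metric.mem_ball, dist_self_sub_right, Complex.norm_real, Real.norm_eq_abs]
  · rwa [Metric.mem_ball, dist_self_add_right, Complex.norm_real, Real.norm_eq_abs]

lemma add_lensArc : z₀ + lensArc R α t =
    z₀ - (R * Real.cos α : ℝ) + R * Complex.exp (Complex.I * t) := by
  rw [lensArc, circleMap, mul_comm Complex.I]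
  ring

lemma sub_lensArc : z₀ - lensArc R α t =
    z₀ + (R * Real.cos α : ℝ) - R * Complex.exp (Complex.I * t) := by
  rw [lensArc, circleMap, mul_comm Complex.I]
  ring

lemma lensArc_re : (lensArc R α t).re = R * (Real.cos t - Real.cos α) := by
  rw [lensArc, circleMap, Complex.add_re, Complex.neg_re, Complex.ofReal_re,
    Complex.re_ofReal_mul, Complex.exp_ofReal_mul_I_re, mul_sub, neg_add_eq_sub]

lemma lensArc_im : (lensArc R α t).im = R * Real.sin t := by
  simp [lensArc, circleMap, -Complex.ofReal_cos, Complex.exp_ofReal_mul_I_im]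

lemma differentiable_lensArc : Differentiable ℝ (lensArc R α) :=
  differentiable_circleMap _ _

lemma deriv_lensArc : deriv (lensArc R α) = fun t => circleMap 0 R t * Complex.I :=
  funext fun _ => deriv_circleMap _ _ _

lemma lensArc_neg_self : lensArc R α (-α) = -lensArc R α α := by
  apply Complex.ext <;> simp [lensArc_re, lensArc_im]

lemma lensArc_self : lensArc R α α = (R * Real.sin α : ℝ) * Complex.I := by
  apply Complex.ext <;>
    simp only [lensArc_re, lensArc_im, Complex.re_ofReal_mul, Complex.im_ofReal_mul, Complex.I_re,
      Complex.I_im, sub_self, mul_zero, mul_one]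

lemma log_lensArc_self_sub_log_lensArc_neg_self (hR : 0 < R) (hα : 0 < Real.sin α) :
    Complex.log (lensArc R α α) - Complex.log (lensArc R α (-α)) = Real.pi * Complex.I := by
  have hpos : 0 < R * Real.sin α := mul_pos hR hα
  rw [lensArc_neg_self, lensArc_self, ← mul_neg, Complex.log_ofReal_mul hpos Complex.I_ne_zero,
    Complex.log_ofReal_mul hpos (neg_ne_zero.2 Complex.I_ne_zero), Complex.log_I, Complex.log_neg_I]
  ring

lemma cos_le_cos_of_mem_Icc_neg (hα : α ≤ Real.pi) (ht : t ∈ Icc (-α) α) :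
    Real.cos α ≤ Real.cos t :=
  Real.cos_abs t ▸ Real.cos_le_cos_of_nonneg_of_le_pi (abs_nonneg t) hα (abs_le.2 ht)

lemma lensArc_mem_slitPlane (hR : 0 < R) (hα : α ∈ Ioo 0 Real.pi) (ht : t ∈ Icc (-α) α) :
    lensArc R α t ∈ Complex.slitPlane := by
  rw [Complex.mem_slitPlane_iff, lensArc_re, lensArc_im]
  rcases (cos_le_cos_of_mem_Icc_neg hα.2.le ht).lt_or_eq with hlt | heq
  · exact .inl (mul_pos hR (sub_pos.2 hlt))
  · have sq_sin : Real.sin t ^ 2 = Real.sin α ^ 2 := by rw [Real.sin_sq, Real.sin_sq, heq]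
    have sin_ne_zero : Real.sin t ≠ 0 := by
      rw [← sq_pos_iff, sq_sin]
      exact pow_pos (Real.sin_pos_of_mem_Ioo hα) 2
    exact .inr (mul_ne_zero hR.ne' sin_ne_zero)

lemma norm_lensArc_add : ‖lensArc R α t + (R * Real.cos α : ℝ)‖ = |R| := by
  rw [lensArc, circleMap, neg_add_eq_sub, sub_add_cancel, ← circleMap_zero, norm_circleMap_zero]

lemma norm_lensArc_sub_le (hR : 0 ≤ R) (hα : α ≤ Real.pi / 2) (ht : t ∈ Icc (-α) α) :
    ‖lensArc R α t - (R * Real.cos α : ℝ)‖ ≤ R := by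
  have cos_nonneg : 0 ≤ Real.cos α :=
    Real.cos_nonneg_of_mem_Icc ⟨by linarith [ht.1, ht.2, Real.pi_pos], hα⟩
  have cos_le : Real.cos α ≤ Real.cos t :=
    cos_le_cos_of_mem_Icc_neg (by linarith [Real.pi_pos]) ht
  have sq_norm : ‖lensArc R α t - (R * Real.cos α : ℝ)‖ ^ 2 =
      R ^ 2 - 4 * R ^ 2 * (Real.cos α * (Real.cos t - Real.cos α)) := by
    rw [Complex.sq_norm, Complex.normSq_apply, Complex.sub_re, Complex.sub_im, Complex.ofReal_re,
      Complex.ofReal_im, lensArc_re, lensArc_im]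
    linear_combination R ^ 2 * Real.sin_sq_add_cos_sq t
  refine le_of_sq_le_sq ?_ hR
  rw [sq_norm]
  exact sub_le_self _ (mul_nonneg (by positivity) (mul_nonneg cos_nonneg (sub_nonneg.2 cos_le)))

lemma add_lensArc_mem_closedLens (hR : 0 ≤ R) (hα : α ≤ Real.pi / 2) (ht : t ∈ Icc (-α) α) :
    z₀ + lensArc R α t ∈ closedLens z₀ R α := by
  rw [mem_closedLens_iff, add_sub_cancel_left, norm_lensArc_add, abs_of_nonneg hR]
  exact ⟨le_rfl, norm_lensArc_sub_le hR hα ht⟩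

lemma sub_lensArc_mem_closedLens (hR : 0 ≤ R) (hα : α ≤ Real.pi / 2) (ht : t ∈ Icc (-α) α) :
    z₀ - lensArc R α t ∈ closedLens z₀ R α := by
  rw [mem_closedLens_iff, sub_sub_cancel_left, ← neg_add', norm_neg, neg_add_eq_sub, norm_sub_rev,
    norm_lensArc_add, abs_of_nonneg hR]
  exact ⟨norm_lensArc_sub_le hR hα ht, le_rfl⟩

lemma continuousOn_comp_add_lensArc {Y : Type*} [TopologicalSpace Y] {f : ℂ → Y} (hR : 0 ≤ R)
    (hα : α ≤ Real.pi / 2) (hf : ContinuousOn f (closedLens z₀ R α)) :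
    ContinuousOn (fun t => f (z₀ + lensArc R α t)) (Icc (-α) α) :=
  hf.comp (differentiable_lensArc.continuous.const_add z₀).continuousOn
    fun _ ht => add_lensArc_mem_closedLens hR hα ht

lemma continuousOn_comp_sub_lensArc {Y : Type*} [TopologicalSpace Y] {f : ℂ → Y} (hR : 0 ≤ R)
    (hα : α ≤ Real.pi / 2) (hf : ContinuousOn f (closedLens z₀ R α)) :
    ContinuousOn (fun t => f (z₀ - lensArc R α t)) (Icc (-α) α) :=
  hf.comp (continuous_const.sub differentiable_lensArc.continuous).continuousOn
    fun _ ht => sub_lensArc_mem_closedLens hR hα ht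

lemma norm_logDeriv_lensArc_le (hR : 0 < R) (hcos : 0 ≤ Real.cos α) (hcos' : Real.cos α < 1) :
    ‖logDeriv (lensArc R α) t‖ ≤ (1 - Real.cos α)⁻¹ := by
  have le_norm_lensArc : R * (1 - Real.cos α) ≤ ‖lensArc R α t‖ := by
    have triangle := norm_sub_norm_le (lensArc R α t + (R * Real.cos α : ℝ)) (R * Real.cos α : ℝ)
    rwa [norm_lensArc_add, add_sub_cancel_right, Complex.norm_real, abs_of_pos hR,
      Real.norm_of_nonneg (mul_nonneg hR.le hcos), ← mul_one_sub] at triangle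
  have hpos : 0 < R * (1 - Real.cos α) := mul_pos hR (sub_pos.2 hcos')
  calc ‖logDeriv (lensArc R α) t‖ = R / ‖lensArc R α t‖ := by
        rw [logDeriv_apply, deriv_lensArc, norm_div, norm_mul, norm_circleMap_zero,
          Complex.norm_I, mul_one, abs_of_pos hR]
    _ ≤ R / (R * (1 - Real.cos α)) := div_le_div_of_nonneg_left hR.le hpos le_norm_lensArc
    _ = (1 - Real.cos α)⁻¹ := by rw [div_mul_cancel_left₀ hR.ne']

end Lens

section Estimate

variable {X : Type*} [NormedAddCommGroup X] [NormedSpace ℂ X] {f : ℂ → X} {z₀ : ℂ} {R α : ℝ}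

lemma integral_logDeriv_lensArc_smul_add [CompleteSpace X] (hR : 0 < R) (hα0 : 0 < α)
    (hα : α ≤ Real.pi / 2) (hf : DifferentiableOn ℂ f (closedLens z₀ R α)) :
    ∫ t in -α..α, logDeriv (lensArc R α) t • (f (z₀ + lensArc R α t) + f (z₀ - lensArc R α t)) =
      (2 * (Real.pi * Complex.I)) • f z₀ := by
  have mem_Ioo : α ∈ Ioo 0 Real.pi := ⟨hα0, by linarith⟩
  have deriv_continuous : Continuous (deriv (lensArc R α)) := by
    rw [deriv_lensArc]
    fun_prop
  rw [← log_lensArc_self_sub_log_lensArc_neg_self hR (Real.sin_pos_of_mem_Ioo mem_Ioo)]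
  exact integral_logDeriv_smul_add_eq_of_convex convex_closedLens
    (closedLens_mem_nhds hR (abs_cos_lt_one_of_mem_Ioo mem_Ioo)) hf (neg_le_self hα0.le)
    (fun t _ => differentiable_lensArc t) deriv_continuous.continuousOn lensArc_neg_self
    (fun t ht => lensArc_mem_slitPlane hR mem_Ioo ht)
    (fun t ht => add_lensArc_mem_closedLens hR.le hα ht)
    (fun t ht => sub_lensArc_mem_closedLens hR.le hα ht)

lemma norm_le_integral_norm_add_norm_of_completeSpace [CompleteSpace X] (hR : 0 < R) (hα0 : 0 < α)
    (hα : α ≤ Real.pi / 2) (hf : DifferentiableOn ℂ f (closedLens z₀ R α)) :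
    ‖f z₀‖ ≤ (∫ t in -α..α, ‖f (z₀ + lensArc R α t)‖ + ‖f (z₀ - lensArc R α t)‖) /
      (2 * Real.pi * (1 - Real.cos α)) := by
  have cos_nonneg : 0 ≤ Real.cos α := Real.cos_nonneg_of_mem_Icc ⟨by linarith, hα⟩
  have cos_lt_one : Real.cos α < 1 :=
    (abs_lt.1 (abs_cos_lt_one_of_mem_Ioo ⟨hα0, by linarith⟩)).2
  have hle : -α ≤ α := neg_le_self hα0.le
  have integrable_norm : IntervalIntegrable
      (fun t => ‖f (z₀ + lensArc R α t)‖ + ‖f (z₀ - lensArc R α t)‖) volume (-α) α :=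
    ((continuousOn_comp_add_lensArc hR.le hα hf.continuousOn).norm.add
      (continuousOn_comp_sub_lensArc hR.le hα hf.continuousOn).norm).intervalIntegrable_of_Icc hle
  have norm_le : 2 * Real.pi * ‖f z₀‖ ≤
      (1 - Real.cos α)⁻¹ * ∫ t in -α..α, ‖f (z₀ + lensArc R α t)‖ + ‖f (z₀ - lensArc R α t)‖ :=
    calc 2 * Real.pi * ‖f z₀‖
        = ‖∫ t in -α..α, logDeriv (lensArc R α) t •
            (f (z₀ + lensArc R α t) + f (z₀ - lensArc R α t))‖ := by
          rw [integral_logDeriv_lensArc_smul_add hR hα0 hα hf]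
          simp [norm_smul, abs_of_pos Real.pi_pos]
      _ ≤ ∫ t in -α..α, (1 - Real.cos α)⁻¹ *
            (‖f (z₀ + lensArc R α t)‖ + ‖f (z₀ - lensArc R α t)‖) := by
          refine intervalIntegral.norm_integral_le_of_norm_le hle (.of_forall fun t _ => ?_)
            (integrable_norm.const_mul _)
          rw [norm_smul]
          gcongr
          · exact norm_logDeriv_lensArc_le hR cos_nonneg cos_lt_one
          · exact norm_add_le _ _
      _ = _ := intervalIntegral.integral_const_mul _ _
  have one_sub_cos_pos : 0 < 1 - Real.cos α := sub_pos.2 cos_lt_one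
  rw [inv_mul_eq_div, le_div_iff₀ one_sub_cos_pos] at norm_le
  rw [le_div_iff₀ (by positivity)]
  linarith

lemma norm_le_integral_norm_add_norm (hR : 0 < R) (hα0 : 0 < α) (hα : α ≤ Real.pi / 2)
    (hf : DifferentiableOn ℂ f (closedLens z₀ R α)) :
    ‖f z₀‖ ≤ (∫ t in -α..α, ‖f (z₀ + lensArc R α t)‖ + ‖f (z₀ - lensArc R α t)‖) /
      (2 * Real.pi * (1 - Real.cos α)) := by
  simpa using norm_le_integral_norm_add_norm_of_completeSpace hR hα0 hα
    ((UniformSpace.Completion.toComplL (𝕜 := ℂ) (E := X)).differentiable.comp_differentiableOn hf)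

theorem cauchy_lens_estimate_general {p : ℝ} (hp : 1 ≤ p) (hR : 0 < R) (hα0 : 0 < α)
    (hα : α ≤ Real.pi / 2) (hf : DifferentiableOn ℂ f (closedLens z₀ R α)) :
    ‖f z₀‖ ^ p ≤ (4 * α) ^ (p - 1) / (2 * Real.pi * (1 - Real.cos α)) ^ p *
      ((∫ t in -α..α, ‖f (z₀ + lensArc R α t)‖ ^ p) +
        ∫ t in -α..α, ‖f (z₀ - lensArc R α t)‖ ^ p) := by
  have hle : -α ≤ α := neg_le_self hα0.le
  have denom_nonneg : 0 ≤ 2 * Real.pi * (1 - Real.cos α) :=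
    mul_nonneg Real.two_pi_pos.le (sub_nonneg.2 (Real.cos_le_one α))
  have power_mean := rpow_intervalIntegral_add_le hle hp
    (fun t => norm_nonneg (f (z₀ + lensArc R α t))) (fun t => norm_nonneg (f (z₀ - lensArc R α t)))
    (continuousOn_comp_add_lensArc hR.le hα hf.continuousOn).norm
    (continuousOn_comp_sub_lensArc hR.le hα hf.continuousOn).norm
  calc ‖f z₀‖ ^ p
      ≤ ((∫ t in -α..α, ‖f (z₀ + lensArc R α t)‖ + ‖f (z₀ - lensArc R α t)‖) /
          (2 * Real.pi * (1 - Real.cos α))) ^ p := by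
        gcongr
        exact norm_le_integral_norm_add_norm hR hα0 hα hf
    _ = (∫ t in -α..α, ‖f (z₀ + lensArc R α t)‖ + ‖f (z₀ - lensArc R α t)‖) ^ p /
          (2 * Real.pi * (1 - Real.cos α)) ^ p :=
        Real.div_rpow (intervalIntegral.integral_nonneg hle fun t _ => by positivity)
          denom_nonneg p
    _ ≤ _ := by
        rw [div_mul_eq_mul_div, show 4 * α = 2 * (α - -α) by ring]
        gcongr

end Estimate

/-- pointwise Cauchy-type estimate on the lens bounded by the two
circular arcs `γ₁(t) = r(1-ac) + ar e^{it}`, `γ₂(t) = r(1+ac) - ar e^{it}`. -/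
theorem cauchy_lens_estimate {X : Type*} [NormedAddCommGroup X] [NormedSpace ℂ X]
    [CompleteSpace X]
    (θ α p r a c : ℝ) (hθ0 : 0 < θ) (hθ : θ < Real.pi / 2) (ha : a = Real.tan θ)
    (hα0 : 0 < α) (hα : α < Real.pi / 2) (hc : c = Real.cos α)
    (hac : a * c < 1) (hp : 1 ≤ p) (hr : 0 < r)
    (hL : {z : ℂ | ‖z - ((r * (1 - a * c) : ℝ) : ℂ)‖ ≤ a * r} ∩
          {z : ℂ | ‖z - ((r * (1 + a * c) : ℝ) : ℂ)‖ ≤ a * r} ⊆ sector θ)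
    (f : ℂ → X) (hf : DifferentiableOn ℂ f (sector θ)) :
    ‖f (r : ℂ)‖ ^ p ≤
      (4 * α) ^ (p - 1) / (2 * Real.pi * (1 - c)) ^ p *
        ((∫ t in Icc (-α) α,
            ‖f (((r * (1 - a * c) : ℝ) : ℂ) + ((a * r : ℝ) : ℂ) * Complex.exp (Complex.I * (t : ℂ)))‖ ^ p) +
         (∫ t in Icc (-α) α,
            ‖f (((r * (1 + a * c) : ℝ) : ℂ) - ((a * r : ℝ) : ℂ) * Complex.exp (Complex.I * (t : ℂ)))‖ ^ p)) := by
  subst hc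
  have ha0 : 0 < a := ha ▸ Real.tan_pos_of_pos_of_lt_pi_div_two hθ0 hθ
  have left_center :
      ((r * (1 - a * Real.cos α) : ℝ) : ℂ) = r - (a * r * Real.cos α : ℝ) := by push_cast; ring
  have right_center :
      ((r * (1 + a * Real.cos α) : ℝ) : ℂ) = r + (a * r * Real.cos α : ℝ) := by push_cast; ring
  have lens_subset : closedLens r (a * r) α ⊆ sector θ := by
    simpa only [left_center, right_center, ← mem_closedBall_iff_norm, ofPred_mem_eq,
      closedLens] using hL
  simpa only [left_center, right_center, add_lensArc, sub_lensArc, integral_Icc_eq_integral_Ioc,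
    intervalIntegral.integral_of_le (neg_le_self hα0.le)] using
    cauchy_lens_estimate_general hp (mul_pos ha0 hr) hα0 hα.le (hf.mono lens_subset)
end

section
/- Let X be a complex Banach space, let 0 < θ ≤ π/2 and q ∈ (1,∞), and let f belong to the Bergman space B^q_θ(X). Then the translation semigroup is strongly continuous at 0 on B^q_θ(X): ∫_{Σ_θ} ‖f(z + t) − f(z)‖_X^q dA(z) → 0 as t → 0⁺ along the positive real axis, where dA denotes two-dimensional Lebesgue measure on Σ_θ. -/
open MeasureTheory Filter Set

/-!
Translations act continuously on `L^q(ℂ)` for `1 ≤ q < ∞`, so the extension of `f` by zero off the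
sector is moved little in `L^q` by a small translation. Translating by `t > 0` never increases
`|arg|` and hence keeps the sector inside itself up to the null set `{-t}` (which matters only for
`θ > π`); therefore on the sector the translate of the extension is a.e. the translate of `f`.
-/

open scoped Topology ENNReal

section LpTranslation

variable {α M ι E : Type*} [NormedAddCommGroup E]

lemma tendsto_integral_norm_rpow_of_tendsto_eLpNorm [MeasurableSpace α] {μ : Measure α}
    {p : ℝ≥0∞} (hp0 : p ≠ 0) (hp_top : p ≠ ∞) {l : Filter ι} {g : ι → α → E}
    (hg : Tendsto (fun i => eLpNorm (g i) p μ) l (𝓝 0)) :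
    Tendsto (fun i => ∫ x, ‖g i x‖ ^ p.toReal ∂μ) l (𝓝 0) := by
  have hp : 0 < p.toReal := ENNReal.toReal_pos hp0 hp_top
  have enorm_le (i : ι) : ‖∫ x, ‖g i x‖ ^ p.toReal ∂μ‖ₑ ≤ eLpNorm (g i) p μ ^ p.toReal :=
    calc ‖∫ x, ‖g i x‖ ^ p.toReal ∂μ‖ₑ
        ≤ ∫⁻ x, ‖‖g i x‖ ^ p.toReal‖ₑ ∂μ := enorm_integral_le_lintegral_enorm _
      _ = ∫⁻ x, ‖g i x‖ₑ ^ p.toReal ∂μ := by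
        simp only [Real.enorm_rpow_of_nonneg (norm_nonneg _) hp.le, enorm_norm]
      _ = eLpNorm (g i) p μ ^ p.toReal := by
        rw [lintegral_rpow_enorm_eq_rpow_eLpNorm' hp, eLpNorm_eq_eLpNorm' hp0 hp_top]
  rw [tendsto_zero_iff_enorm_tendsto_zero]
  refine tendsto_of_tendsto_of_tendsto_of_le_of_le tendsto_const_nhds ?_ (fun _ => zero_le)
    enorm_le
  simpa only [ENNReal.zero_rpow_of_pos hp] using hg.ennrpow_const p.toReal

variable [TopologicalSpace α] [R1Space α] [MeasurableSpace α] [BorelSpace α]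
  [AddMonoid M] [TopologicalSpace M] [AddAction M α] [ContinuousVAdd M α]
  {μ : Measure α} [IsLocallyFiniteMeasure μ] [μ.InnerRegularCompactLTTop]
  [VAddInvariantMeasure M α μ] {p : ℝ≥0∞}

lemma tendsto_eLpNorm_vadd_sub (hp : 1 ≤ p) (hp_top : p ≠ ∞) {f : α → E} (hf : MemLp f p μ) :
    Tendsto (fun c : M => eLpNorm ((fun x => f (c +ᵥ x)) - f) p μ) (𝓝 0) (𝓝 0) := by
  borelize M
  have : Fact (1 ≤ p) := ⟨hp⟩
  have : Fact (p ≠ ∞) := ⟨hp_top⟩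
  have translate_memLp (c : M) : MemLp (fun x => f (c +ᵥ x)) p μ :=
    hf.comp_measurePreserving (measurePreserving_vadd c μ)
  have vadd_continuous : Continuous fun c : M => DomAddAct.mk c +ᵥ hf.toLp f :=
    DomAddAct.continuous_mk.vadd continuous_const
  refine (Lp.tendsto_Lp_iff_tendsto_eLpNorm'' _ translate_memLp f hf).1 ?_
  exact vadd_continuous.tendsto' 0 _ (by rw [DomAddAct.mk_zero, zero_vadd])

lemma tendsto_setIntegral_norm_vadd_sub_rpow (hp : 1 ≤ p) (hp_top : p ≠ ∞) {s : Set α}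
    (hs : MeasurableSet s) {f : α → E} (hf : MemLp f p (μ.restrict s)) {l : Filter ι} {c : ι → M}
    (hc : Tendsto c l (𝓝 0)) (hcs : ∀ᶠ i in l, ∀ᵐ x ∂μ.restrict s, c i +ᵥ x ∈ s) :
    Tendsto (fun i => ∫ x in s, ‖f (c i +ᵥ x) - f x‖ ^ p.toReal ∂μ) l (𝓝 0) := by
  have hp0 : p ≠ 0 := (zero_lt_one.trans_le hp).ne'
  refine tendsto_integral_norm_rpow_of_tendsto_eLpNorm hp0 hp_top ?_
  have extension_memLp : MemLp (s.indicator f) p μ := (memLp_indicator_iff_restrict hs).2 hf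
  have translates_tendsto :
      Tendsto (fun i => eLpNorm ((fun x => s.indicator f (c i +ᵥ x)) - s.indicator f) p μ)
        l (𝓝 0) :=
    (tendsto_eLpNorm_vadd_sub hp hp_top extension_memLp).comp hc
  refine tendsto_of_tendsto_of_tendsto_of_le_of_le' tendsto_const_nhds translates_tendsto
    (Eventually.of_forall fun _ => zero_le) ?_
  filter_upwards [hcs] with i hi
  have eq_extension : (fun x => f (c i +ᵥ x) - f x) =ᵐ[μ.restrict s]
      (fun x => s.indicator f (c i +ᵥ x)) - s.indicator f := by
    filter_upwards [hi, ae_restrict_mem hs] with x hcx hx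
    simp only [Pi.sub_apply, indicator_of_mem hcx, indicator_of_mem hx]
  exact (eLpNorm_congr_ae eq_extension).trans_le (eLpNorm_restrict_le _ p μ s)

end LpTranslation

section Sector

open InnerProductGeometry

lemma angle_add_smul_le {V : Type*} [NormedAddCommGroup V] [InnerProductSpace ℝ V] {x y : V}
    {t : ℝ} (ht : 0 ≤ t) (h : x + t • y ≠ 0) : angle (x + t • y) y ≤ angle x y := by
  have mem_span : x + t • y ∈ Submodule.span NNReal {x, y} :=
    Submodule.mem_span_pair.2 ⟨1, ⟨t, ht⟩, by rw [one_smul]; rfl⟩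
  rw [angle_eq_angle_add_add_angle_add_of_mem_span h mem_span]
  exact le_add_of_nonneg_left (angle_nonneg _ _)

lemma abs_arg_add_ofReal_le (z : ℂ) {t : ℝ} (ht : 0 ≤ t) : |(z + t).arg| ≤ |z.arg| := by
  rcases eq_or_ne z 0 with rfl | hz
  · simp [Complex.arg_ofReal_of_nonneg ht]
  rcases eq_or_ne (z + t) 0 with hzt | hzt
  · simp [hzt]
  rw [← Complex.angle_one_right hz, ← Complex.angle_one_right hzt]
  simpa using angle_add_smul_le (x := z) (y := 1) ht (by simpa using hzt)

lemma add_ofReal_mem_sector {θ : ℝ} {z : ℂ} (hz : z ∈ sector θ) {t : ℝ} (ht : 0 ≤ t)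
    (hzt : z + t ≠ 0) : z + t ∈ sector θ :=
  ⟨hzt, (abs_arg_add_ofReal_le z ht).trans_lt hz.2⟩

lemma measurableSet_sector (θ : ℝ) : MeasurableSet (sector θ) :=
  (measurableSet_singleton (0 : ℂ)).compl.inter
    (measurableSet_lt Complex.measurable_arg.abs measurable_const)

lemma ae_add_ofReal_mem_sector (θ : ℝ) {t : ℝ} (ht : 0 ≤ t) :
    ∀ᵐ z ∂volume.restrict (sector θ), z + (t : ℂ) ∈ sector θ := by
  filter_upwards [ae_restrict_mem (measurableSet_sector θ), Measure.ae_ne _ (-(t : ℂ))]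
    with z hz hzt
  exact add_ofReal_mem_sector hz ht (mt eq_neg_of_add_eq_zero_left hzt)

end Sector

theorem bergman_translation_strong_continuity_general {X : Type*} [NormedAddCommGroup X]
    (θ q : ℝ) (hq : 1 ≤ q) (f : ℂ → X) (hf : AEStronglyMeasurable f (volume.restrict (sector θ)))
    (hfi : IntegrableOn (fun z => ‖f z‖ ^ q) (sector θ)) :
    Tendsto (fun t : ℝ => ∫ z in sector θ, ‖f (z + (t : ℂ)) - f z‖ ^ q)
      (nhdsWithin 0 (Ioi 0)) (nhds 0) := by
  have hp : 1 ≤ ENNReal.ofReal q := ENNReal.one_le_ofReal.2 hq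
  have hpq : (ENNReal.ofReal q).toReal = q := ENNReal.toReal_ofReal (zero_le_one.trans hq)
  have f_memLp : MemLp f (ENNReal.ofReal q) (volume.restrict (sector θ)) := by
    rw [← integrable_norm_rpow_iff hf (zero_lt_one.trans_le hp).ne' ENNReal.ofReal_ne_top, hpq]
    exact hfi
  have ofReal_tendsto : Tendsto (fun t : ℝ => (t : ℂ)) (𝓝[>] 0) (𝓝 0) :=
    (Complex.continuous_ofReal.tendsto' 0 0 Complex.ofReal_zero).mono_left nhdsWithin_le_nhds
  have sector_invariant : ∀ᶠ t : ℝ in 𝓝[>] 0,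
      ∀ᵐ z ∂volume.restrict (sector θ), (t : ℂ) +ᵥ z ∈ sector θ := by
    filter_upwards [self_mem_nhdsWithin] with t ht
    simpa only [vadd_eq_add, add_comm] using ae_add_ofReal_mem_sector θ (le_of_lt ht)
  simpa only [vadd_eq_add, add_comm, hpq] using tendsto_setIntegral_norm_vadd_sub_rpow hp
    ENNReal.ofReal_ne_top (measurableSet_sector θ) f_memLp ofReal_tendsto sector_invariant

/-- strong continuity at `0` of the translation semigroup on the
Bergman space: `∫_{Σ_θ} ‖f(z+t) - f(z)‖^q dA(z) → 0` as `t → 0⁺`. -/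
theorem bergman_translation_strong_continuity {X : Type*} [NormedAddCommGroup X]
    [NormedSpace ℂ X] [CompleteSpace X]
    (θ q : ℝ) (hθ0 : 0 < θ) (hθ : θ ≤ Real.pi / 2) (hq1 : 1 < q)
    (f : ℂ → X) (hf : DifferentiableOn ℂ f (sector θ))
    (hfi : IntegrableOn (fun z => ‖f z‖ ^ q) (sector θ)) :
    Tendsto (fun t : ℝ => ∫ z in sector θ, ‖f (z + (t : ℂ)) - f z‖ ^ q)
      (nhdsWithin 0 (Ioi 0)) (nhds 0) :=
  bergman_translation_strong_continuity_general θ q hq1.le f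
    (hf.continuousOn.aestronglyMeasurable (measurableSet_sector θ)) hfi
end
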